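/- arXiv:1804.02587 — 10 statements merged into one kernel-verified Lean document; each statement's English description precedes it below -/
import Mathlib

section
/- Let K be a linearly ordered field with a non-archimedean multiplicative absolute value |·| : K → ℝ satisfying |x+y| = max(|x|,|y|) whenever x ≥ 0 and y ≥ 0. Let d ≥ 1 and let M = (m_{ij}) be a d×d matrix over K with det M ≠ 0, with m_{ii} = 1 for all i, and with |det M| = 1. Define I_M = {x ∈ ℝ^d : x_1+⋯+x_d = 1, and for all 1 ≤ i < j ≤ d, |m_{ij}| ≤ e^{x_i−x_j} and |m_{ji}| ≤ e^{x_j−x_i}} and I⁺_M = {x ∈ ℝ^d : x_1+⋯+x_d = 1, and for all 1 ≤ i < d, |m_{i,i+1}| ≤ e^{x_i−x_{i+1}} and |m_{i+1,i}| ≤ e^{x_{i+1}−x_i}}. If M is totally nonnegative, then I_M = I⁺_M. -/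
noncomputable section

/-- Total nonnegativity of a matrix over a linearly ordered field: all minors
are nonnegative. -/
def TotNonneg {K : Type*} [Field K] [LinearOrder K] [IsStrictOrderedRing K] {d : ℕ}
    (M : Matrix (Fin d) (Fin d) K) : Prop :=
  ∀ (k : ℕ) (f g : Fin k → Fin d), StrictMono f → StrictMono g →
    0 ≤ (M.submatrix f g).det

/-- Proposition 4.6 (positive intersection): for a totally nonnegative matrix `M`
with unit diagonal, nonzero determinant of absolute value one, the set `I_M` cut
out by all the inequalities `-v(m_ij) ≤ x_i - x_j ≤ v(m_ji)` (written
multiplicatively via the absolute value `|·| = e^{-v(·)}`) coincides with the set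
`I⁺_M` cut out by the inequalities for consecutive indices only. -/
theorem stmt0 {K : Type*} [Field K] [LinearOrder K] [IsStrictOrderedRing K] (abv : K → ℝ)
    (habs0 : ∀ x : K, 0 ≤ abv x)
    (habs1 : ∀ x : K, abv x = 0 ↔ x = 0)
    (habs2 : ∀ x y : K, abv (x * y) = abv x * abv y)
    (habs3 : ∀ x y : K, abv (x + y) ≤ max (abv x) (abv y))
    (hposmax : ∀ x y : K, 0 ≤ x → 0 ≤ y → abv (x + y) = max (abv x) (abv y))
    (d : ℕ) (hd : 1 ≤ d) (M : Matrix (Fin d) (Fin d) K)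
    (hdet : M.det ≠ 0) (hdiag : ∀ i, M i i = 1) (habsdet : abv M.det = 1)
    (htn : TotNonneg M) :
    {x : Fin d → ℝ | (∑ i, x i) = 1 ∧ ∀ i j : Fin d, i < j →
        abv (M i j) ≤ Real.exp (x i - x j) ∧ abv (M j i) ≤ Real.exp (x j - x i)} =
    {x : Fin d → ℝ | (∑ i, x i) = 1 ∧ ∀ i j : Fin d, (j : ℕ) = (i : ℕ) + 1 →
        abv (M i j) ≤ Real.exp (x i - x j) ∧ abv (M j i) ≤ Real.exp (x j - x i)} := by
  have mono : ∀ a b : K, 0 ≤ a → a ≤ b → abv a ≤ abv b := by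
    intro a b ha hab
    have h := hposmax a (b - a) ha (sub_nonneg.2 hab)
    rw [add_sub_cancel] at h
    rw [h]
    exact le_max_left _ _
  have ent : ∀ i j, 0 ≤ M i j := by
    intro i j
    have h := htn 1 (fun _ => i) (fun _ => j) (Subsingleton.strictMono _) (Subsingleton.strictMono _)
    simpa using h
  have sm : ∀ a b : Fin d, a < b → StrictMono ![a, b] := by
    intro a b hab p q hpq
    fin_cases p <;> fin_cases q <;> simp_all
  have up : ∀ i k j : Fin d, i < k → k < j → abv (M i j) ≤ abv (M i k) * abv (M k j) := by
    intro i k j hik hkj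
    have h := htn 2 ![i, k] ![k, j] (sm _ _ hik) (sm _ _ hkj)
    rw [Matrix.det_fin_two] at h
    simp [hdiag] at h
    rw [← habs2]
    exact mono _ _ (ent _ _) h
  have lo : ∀ i k j : Fin d, i < k → k < j → abv (M j i) ≤ abv (M j k) * abv (M k i) := by
    intro i k j hik hkj
    have h := htn 2 ![k, j] ![i, k] (sm _ _ hkj) (sm _ _ hik)
    rw [Matrix.det_fin_two] at h
    simp [hdiag] at h
    rw [← habs2]
    refine mono _ _ (ent _ _) ?_
    linarith [mul_comm (M j k) (M k i)]
  ext x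
  simp only [Set.mem_setOf_eq]
  refine and_congr_right fun _ => ⟨fun h i j hij => h i j (by rw [Fin.lt_def]; omega), fun h => ?_⟩
  have key : ∀ n : ℕ, ∀ i j : Fin d, (j : ℕ) = (i : ℕ) + n + 1 →
      abv (M i j) ≤ Real.exp (x i - x j) ∧ abv (M j i) ≤ Real.exp (x j - x i) := by
    intro n
    induction n with
    | zero => intro i j hij; exact h i j (by omega)
    | succ n ih =>
      intro i j hij
      have hj := j.2
      let k : Fin d := ⟨(i : ℕ) + n + 1, by omega⟩
      have hk : (k : ℕ) = (i : ℕ) + n + 1 := rfl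
      have h1 := ih i k hk
      have h2 := h k j (by omega)
      have hik : i < k := by rw [Fin.lt_def]; omega
      have hkj : k < j := by rw [Fin.lt_def]; omega
      constructor
      · refine (up i k j hik hkj).trans ?_
        rw [show x i - x j = (x i - x k) + (x k - x j) by ring, Real.exp_add]
        exact mul_le_mul h1.1 h2.1 (habs0 _) (Real.exp_pos _).le
      · refine (lo i k j hik hkj).trans ?_
        rw [show x j - x i = (x j - x k) + (x k - x i) by ring, Real.exp_add]
        exact mul_le_mul h2.2 h1.2 (habs0 _) (Real.exp_pos _).le
  intro i j hij
  rw [Fin.lt_def] at hij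
  exact key ((j : ℕ) - i - 1) i j (by omega)
end
end

section
/- Let K be a linearly ordered field with a non-archimedean multiplicative absolute value |·| : K → ℝ satisfying |x+y| = max(|x|,|y|) whenever x ≥ 0 and y ≥ 0. Let d ≥ 1 and let M = (m_{ij}) be a d×d upper triangular matrix over K with det M ≠ 0 (so m_{jj} ≠ 0 for all j). Define I_M = {x ∈ ℝ^d : x_1+⋯+x_d = 1, and for all 1 ≤ i < j ≤ d, |m_{ij}| ≤ |m_{jj}|·e^{x_i−x_j}} and I⁺_M = {x ∈ ℝ^d : x_1+⋯+x_d = 1, and for all 1 ≤ i < d, |m_{i,i+1}| ≤ |m_{i+1,i+1}|·e^{x_i−x_{i+1}}}. If M is totally nonnegative, then I_M = I⁺_M. -/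
noncomputable section

/-- Corollary 4.7 (upper triangular case): for a totally nonnegative upper
triangular invertible matrix `M`, the set `I_M` cut out by all the inequalities
`x_i - x_j + v(m_ii/m_jj) ≥ -v(m_ij/m_ii)` for `i < j` (written multiplicatively
via the absolute value `|·| = e^{-v(·)}` as `|m_ij| ≤ |m_jj|·e^{x_i - x_j}`)
coincides with the set `I⁺_M` cut out by the inequalities for consecutive
indices only. -/
theorem stmt1 {K : Type*} [Field K] [LinearOrder K] [IsStrictOrderedRing K] (abv : K → ℝ)
    (habs0 : ∀ x : K, 0 ≤ abv x)
    (habs1 : ∀ x : K, abv x = 0 ↔ x = 0)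
    (habs2 : ∀ x y : K, abv (x * y) = abv x * abv y)
    (habs3 : ∀ x y : K, abv (x + y) ≤ max (abv x) (abv y))
    (hposmax : ∀ x y : K, 0 ≤ x → 0 ≤ y → abv (x + y) = max (abv x) (abv y))
    (d : ℕ) (hd : 1 ≤ d) (M : Matrix (Fin d) (Fin d) K)
    (hupper : ∀ i j : Fin d, j < i → M i j = 0)
    (hdet : M.det ≠ 0)
    (htn : TotNonneg M) :
    {x : Fin d → ℝ | (∑ i, x i) = 1 ∧ ∀ i j : Fin d, i < j →
        abv (M i j) ≤ abv (M j j) * Real.exp (x i - x j)} =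
    {x : Fin d → ℝ | (∑ i, x i) = 1 ∧ ∀ i j : Fin d, (j : ℕ) = (i : ℕ) + 1 →
        abv (M i j) ≤ abv (M j j) * Real.exp (x i - x j)} := by
  have hdiag : ∀ k, M k k ≠ 0 := by
    intro k hk
    apply hdet
    rw [Matrix.det_of_upperTriangular (fun i j h => hupper i j h)]
    exact Finset.prod_eq_zero (Finset.mem_univ k) hk
  have hnn : ∀ i j, 0 ≤ M i j := by
    intro i j
    have h := htn 1 (fun _ => i) (fun _ => j) (Subsingleton.strictMono _)
      (Subsingleton.strictMono _)
    simpa using h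
  have hminor : ∀ i k j : Fin d, i < k → k < j → M i j * M k k ≤ M i k * M k j := by
    intro i k j hik hkj
    have h := htn 2 ![i, k] ![k, j] (by simpa using hik) (by simpa using hkj)
    rw [Matrix.det_fin_two] at h
    simpa using h
  have hmono : ∀ a b : K, 0 ≤ a → a ≤ b → abv a ≤ abv b := by
    intro a b ha hab
    have h := hposmax a (b - a) ha (sub_nonneg.2 hab)
    rw [add_sub_cancel] at h
    rw [h]
    exact le_max_left _ _
  ext x
  simp only [Set.mem_setOf_eq]
  refine and_congr_right fun _ => ⟨fun h i j hij => h i j (by rw [Fin.lt_def]; omega), fun h => ?_⟩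
  have key : ∀ n : ℕ, ∀ i j : Fin d, (j : ℕ) = i + n + 1 →
      abv (M i j) ≤ abv (M j j) * Real.exp (x i - x j) := by
    intro n
    induction n with
    | zero => intro i j hij; exact h i j (by omega)
    | succ n ih =>
      intro i j hij
      have hjd := j.isLt
      obtain ⟨k, hk⟩ : ∃ k : Fin d, (k : ℕ) = i + n + 1 := ⟨⟨i + n + 1, by omega⟩, rfl⟩
      have h1 := ih i k hk
      have h2 := h k j (by omega)
      have h3 := hmono _ _ (mul_nonneg (hnn i j) (hnn k k))
        (hminor i k j (by rw [Fin.lt_def]; omega) (by rw [Fin.lt_def]; omega))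
      rw [habs2, habs2] at h3
      have hpos : 0 < abv (M k k) :=
        lt_of_le_of_ne (habs0 _) (fun e => hdiag k ((habs1 _).1 e.symm))
      have h4 := mul_le_mul h1 h2 (habs0 _) (by positivity)
      have e : Real.exp (x i - x j) = Real.exp (x i - x k) * Real.exp (x k - x j) := by
        rw [← Real.exp_add]; congr 1; ring
      rw [e]
      refine le_of_mul_le_mul_right ?_ hpos
      calc _ ≤ _ := h3
        _ ≤ _ := h4
        _ = _ := by ring
  intro i j hij
  rw [Fin.lt_def] at hij
  exact key (j - i - 1) i j (by omega)
end
end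

section
/- Let K be a linearly ordered field with a non-archimedean multiplicative absolute value |·| : K → ℝ satisfying |x+y| = max(|x|,|y|) whenever x ≥ 0 and y ≥ 0. Let A = (a_{ij}) and B = (b_{ij}) be totally nonnegative d×d matrices over K with det A ≠ 0 and det B ≠ 0, such that A is upper triangular and B is triangular (upper or lower). Let C = AB = (c_{ij}), and assume that |det C| = max over all permutations σ of {1,…,d} of |c_{σ(1)1}·c_{σ(2)2}⋯c_{σ(d)d}|. Then |det C| = |c_{11}·c_{22}⋯c_{dd}|, and for every 1 ≤ i < d one has |c_{i,i+1}|·|a_{i+1,i+1}| ≥ |a_{i,i+1}|·|c_{i+1,i+1}|. -/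
noncomputable section

/-- Lemma 5.2 (monotonicity lemma): if `A`, `B` are totally nonnegative
invertible matrices with `A` upper triangular and `B` triangular, and
`C = A * B` satisfies `|det C| = max_σ |c_{σ(1)1} ⋯ c_{σ(d)d}|`, then
`|det C| = |c_{11} ⋯ c_{dd}|` and `|c_{i,i+1}|·|a_{i+1,i+1}| ≥
|a_{i,i+1}|·|c_{i+1,i+1}|` for all `i` (i.e. `v(c_{i,i+1}/c_{i+1,i+1}) ≤
v(a_{i,i+1}/a_{i+1,i+1})`). -/
theorem stmt2 {K : Type*} [Field K] [LinearOrder K] [IsStrictOrderedRing K] (abv : K → ℝ)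
    (habs0 : ∀ x : K, 0 ≤ abv x)
    (habs1 : ∀ x : K, abv x = 0 ↔ x = 0)
    (habs2 : ∀ x y : K, abv (x * y) = abv x * abv y)
    (habs3 : ∀ x y : K, abv (x + y) ≤ max (abv x) (abv y))
    (hposmax : ∀ x y : K, 0 ≤ x → 0 ≤ y → abv (x + y) = max (abv x) (abv y))
    (d : ℕ) (A B C : Matrix (Fin d) (Fin d) K)
    (htnA : TotNonneg A) (htnB : TotNonneg B)
    (hdetA : A.det ≠ 0) (hdetB : B.det ≠ 0)
    (hAupper : ∀ i j : Fin d, j < i → A i j = 0)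
    (hBtri : (∀ i j : Fin d, j < i → B i j = 0) ∨ (∀ i j : Fin d, i < j → B i j = 0))
    (hC : C = A * B)
    (hmax : IsGreatest
      (Set.range fun σ : Equiv.Perm (Fin d) => abv (∏ i, C (σ i) i))
      (abv C.det)) :
    abv C.det = abv (∏ i, C i i) ∧
    ∀ i j : Fin d, (j : ℕ) = (i : ℕ) + 1 →
      abv (A i j) * abv (C j j) ≤ abv (C i j) * abv (A j j) := by
  have h1 : abv 1 = 1 := by
    have h := habs2 1 1
    rw [mul_one] at h
    have h0 : abv 1 ≠ 0 := fun h => one_ne_zero ((habs1 1).1 h)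
    exact (mul_left_cancel₀ h0 (by rw [← h, mul_one])).symm
  have hprod : ∀ f : Fin d → K, abv (∏ i, f i) = ∏ i, abv (f i) := fun f =>
    map_prod ({ toFun := abv, map_one' := h1, map_mul' := habs2 } : K →* ℝ) f Finset.univ
  have hmono : ∀ x y : K, 0 ≤ x → x ≤ y → abv x ≤ abv y := by
    intro x y hx hxy
    have h := hposmax x (y - x) hx (sub_nonneg.2 hxy)
    rw [add_sub_cancel] at h
    rw [h]
    exact le_max_left _ _
  have hent : ∀ M : Matrix (Fin d) (Fin d) K, TotNonneg M → ∀ i j, 0 ≤ M i j := by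
    intro M hM i j
    have h := hM 1 (fun _ => i) (fun _ => j) (Subsingleton.strictMono _)
      (Subsingleton.strictMono _)
    simpa using h
  have hA := hent A htnA
  have hB := hent B htnB
  have hdA : A.det = ∏ i, A i i := Matrix.det_of_upperTriangular (fun i j h => hAupper i j h)
  have hdB : B.det = ∏ i, B i i := by
    rcases hBtri with h | h
    · exact Matrix.det_of_upperTriangular (fun i j hh => h i j hh)
    · exact Matrix.det_of_lowerTriangular _ (fun i j hh => h i j hh)
  have hdC : C.det = ∏ i, (A i i * B i i) := by
    rw [hC, Matrix.det_mul, hdA, hdB, Finset.prod_mul_distrib]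
  have hge : ∀ i k j, abv (A i k * B k j) ≤ abv (C i j) := by
    intro i k j
    refine hmono _ _ (mul_nonneg (hA _ _) (hB _ _)) ?_
    rw [hC, Matrix.mul_apply]
    exact Finset.single_le_sum (f := fun k => A i k * B k j)
      (fun k _ => mul_nonneg (hA _ _) (hB _ _)) (Finset.mem_univ k)
  have hup : abv (∏ i, C i i) ≤ abv C.det := hmax.2 ⟨1, by simp⟩
  have hpos : ∀ i, 0 < abv (A i i * B i i) := by
    intro i
    refine lt_of_le_of_ne (habs0 _) (fun h => ?_)
    have h0 := (habs1 _).1 h.symm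
    have : C.det = 0 := by
      rw [hdC]
      exact Finset.prod_eq_zero (Finset.mem_univ i) h0
    rw [hC, Matrix.det_mul] at this
    exact mul_ne_zero hdetA hdetB this
  have hdiag : ∀ i, abv (C i i) = abv (A i i * B i i) := by
    intro i
    by_contra hne
    have hlt : abv (A i i * B i i) < abv (C i i) := lt_of_le_of_ne (hge i i i) (Ne.symm hne)
    have := Finset.prod_lt_prod (s := Finset.univ) (fun i _ => hpos i) (fun i _ => hge i i i)
      ⟨i, Finset.mem_univ i, hlt⟩
    rw [hdC, hprod, hprod] at hup
    exact absurd hup (not_le.2 this)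
  refine ⟨?_, ?_⟩
  · rw [hdC, hprod, hprod]
    exact Finset.prod_congr rfl (fun i _ => (hdiag i).symm)
  · intro i j _
    rw [hdiag j, habs2]
    have h := mul_le_mul_of_nonneg_right (hge i j j) (habs0 (A j j))
    rw [habs2] at h
    linarith
end
end

section
/- Let (E,F,G) be a triple of flags in ℝ^d with the maximum span property, and let u_1 be a nonzero linear functional on ℝ^d vanishing on E^(d−1). Then there exists a unique sequence (u_2,…,u_d) of linear functionals on ℝ^d such that for every 2 ≤ i ≤ d, u_i vanishes on E^(d−i) + G^(i−1) and u_{i−1} + u_i vanishes on F^(1). Moreover each u_i is nonzero and (u_1,…,u_d) is a basis of the dual space (ℝ^d)^*. -/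
noncomputable section

abbrev Vec (d : ℕ) : Type := Fin d → ℝ

/-- A complete flag in `ℝ^d`. -/
def IsFlag {d : ℕ} (F : ℕ → Submodule ℝ (Vec d)) : Prop :=
  Monotone F ∧ ∀ i, i ≤ d → Module.finrank ℝ (F i) = i

/-- The maximum span property for a tuple of flags. -/
def MaxSpan {d t : ℕ} (F : Fin t → ℕ → Submodule ℝ (Vec d)) : Prop :=
  ∀ a : Fin t → ℕ, (∀ j, a j ≤ d) →
    Module.finrank ℝ ↥(⨆ j, F j (a j)) = min (∑ j, a j) d

/-- The snake condition for a putative snake basis `(u_1, …, u_d)` associated to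
the bottom snake of a maximum span triple `(E,F,G)`: for `2 ≤ i ≤ d`, `u_i`
vanishes on `E^(d-i) + G^(i-1)` and `u_{i-1} + u_i` vanishes on `F^(1)`. -/
def SnakeCond {d : ℕ} (E F G : ℕ → Submodule ℝ (Vec d))
    (u : ℕ → Module.Dual ℝ (Vec d)) : Prop :=
  ∀ i, 2 ≤ i → i ≤ d →
    (∀ v ∈ E (d - i) ⊔ G (i - 1), u i v = 0) ∧
    (∀ v ∈ F 1, (u (i - 1) + u i) v = 0)

theorem aux_top {d : ℕ} (E F G : ℕ → Submodule ℝ (Vec d))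
    (hmax : MaxSpan ![E, F, G]) (a b c : ℕ) (ha : a ≤ d) (hb : b ≤ d) (hc : c ≤ d)
    (h : d ≤ a + b + c) : E a ⊔ F b ⊔ G c = ⊤ := by
  have h1 := hmax ![a, b, c] (by intro j; fin_cases j <;> simpa)
  have h2 : (⨆ j, (![E, F, G] : Fin 3 → ℕ → Submodule ℝ (Vec d)) j (![a, b, c] j))
      = E a ⊔ F b ⊔ G c := by
    apply le_antisymm
    · apply iSup_le
      intro j
      fin_cases j
      · exact le_sup_of_le_left le_sup_left
      · exact le_sup_of_le_left le_sup_right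
      · exact le_sup_right
    · refine sup_le (sup_le ?_ ?_) ?_
      · exact le_iSup (fun j => (![E, F, G] : Fin 3 → ℕ → Submodule ℝ (Vec d)) j (![a, b, c] j)) 0
      · exact le_iSup (fun j => (![E, F, G] : Fin 3 → ℕ → Submodule ℝ (Vec d)) j (![a, b, c] j)) 1
      · exact le_iSup (fun j => (![E, F, G] : Fin 3 → ℕ → Submodule ℝ (Vec d)) j (![a, b, c] j)) 2
  rw [h2] at h1
  apply Submodule.eq_top_of_finrank_eq
  rw [h1]
  simp [Fin.sum_univ_three]
  omega

theorem aux_le {d : ℕ} (E G : ℕ → Submodule ℝ (Vec d)) (hE : IsFlag E) (hG : IsFlag G)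
    (i : ℕ) (hi : 1 ≤ i) (hid : i ≤ d) :
    E (d - i) ⊔ G (i - 1) ≠ ⊤ := by
  intro h
  have h1 := Submodule.finrank_add_le_finrank_add_finrank (E (d - i)) (G (i - 1))
  rw [h, hE.2 _ (by omega), hG.2 _ (by omega)] at h1
  simp at h1
  omega

/-- Existence, uniqueness and nondegeneracy of the snake basis: given a maximum
span triple of flags `(E,F,G)` and a nonzero functional `u₁` vanishing on
`E^(d-1)`, there is a unique continuation `(u_2, …, u_d)` satisfying the snake
condition, each `u_i` is nonzero, and `(u_1, …, u_d)` is a basis of the dual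
space `(ℝ^d)^*`. -/
theorem stmt6 {d : ℕ} (E F G : ℕ → Submodule ℝ (Vec d))
    (hE : IsFlag E) (hF : IsFlag F) (hG : IsFlag G)
    (hmax : MaxSpan ![E, F, G])
    (u1 : Module.Dual ℝ (Vec d)) (hu1 : u1 ≠ 0)
    (hu1E : ∀ v ∈ E (d - 1), u1 v = 0) :
    (∃ u : ℕ → Module.Dual ℝ (Vec d), u 1 = u1 ∧ SnakeCond E F G u) ∧
    (∀ u u' : ℕ → Module.Dual ℝ (Vec d),
      u 1 = u1 → SnakeCond E F G u → u' 1 = u1 → SnakeCond E F G u' →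
      ∀ i, 2 ≤ i → i ≤ d → u i = u' i) ∧
    (∀ u : ℕ → Module.Dual ℝ (Vec d), u 1 = u1 → SnakeCond E F G u →
      (∀ i, 1 ≤ i → i ≤ d → u i ≠ 0) ∧
      LinearIndependent ℝ (fun i : Fin d => u ((i : ℕ) + 1)) ∧
      Submodule.span ℝ (Set.range fun i : Fin d => u ((i : ℕ) + 1)) = ⊤) := by
  have hd : 1 ≤ d := by
    rcases Nat.eq_zero_or_pos d with h | h
    · subst h
      exact absurd (LinearMap.ext fun v => by
        rw [Subsingleton.elim v 0, map_zero, map_zero]) hu1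
    · exact h
  have hz : ∀ H : ℕ → Submodule ℝ (Vec d), IsFlag H → H 0 = ⊥ := fun H hH =>
    Submodule.finrank_eq_zero.1 (hH.2 0 (Nat.zero_le _))
  obtain ⟨f, hf0, hf⟩ := finrank_eq_one_iff'.1 (hF.2 1 hd)
  have hfF : ∀ φ : Module.Dual ℝ (Vec d), φ f = 0 → ∀ v ∈ F 1, φ v = 0 := by
    intro φ h v hv
    obtain ⟨c, hc⟩ := hf ⟨v, hv⟩
    have : v = c • (f : Vec d) := by
      have := congrArg Subtype.val hc
      simpa using this.symm
    rw [this, map_smul, h, smul_zero]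
  -- a functional vanishing on W_i and f is zero
  have key : ∀ i, 1 ≤ i → i ≤ d → ∀ φ : Module.Dual ℝ (Vec d),
      (∀ v ∈ E (d - i) ⊔ G (i - 1), φ v = 0) → φ f = 0 → φ = 0 := by
    intro i hi hid φ h1 h2
    have ht := aux_top E F G hmax (d - i) 1 (i - 1) (by omega) hd (by omega) (by omega)
    have : E (d - i) ⊔ F 1 ⊔ G (i - 1) ≤ LinearMap.ker φ := by
      refine sup_le (sup_le ?_ ?_) ?_
      · exact fun v hv => h1 v (le_sup_left (a := E (d - i)) hv)
      · exact hfF φ h2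
      · exact fun v hv => h1 v (le_sup_right (a := E (d - i)) hv)
    rw [ht, top_le_iff] at this
    exact LinearMap.ker_eq_top.1 this
  have hW1 : ∀ v ∈ E (d - 1) ⊔ G (1 - 1), u1 v = 0 := by
    intro v hv
    rw [Nat.sub_self, hz G hG, sup_bot_eq] at hv
    exact hu1E v hv
  have hu1f : u1 f ≠ 0 := fun h => hu1 (key 1 le_rfl hd u1 hW1 h)
  have hex : ∀ i, 1 ≤ i → i ≤ d → ∃ w : Module.Dual ℝ (Vec d),
      (∀ v ∈ E (d - i) ⊔ G (i - 1), w v = 0) ∧ w f = 1 := by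
    intro i hi hid
    obtain ⟨w, hw0, hw⟩ := Submodule.exists_le_ker_of_lt_top _
      (lt_top_iff_ne_top.2 (aux_le E G hE hG i hi hid))
    have hwf : w f ≠ 0 := fun h => hw0 (key i hi hid w (fun v hv => hw hv) h)
    refine ⟨(w f)⁻¹ • w, fun v hv => ?_, ?_⟩
    · have : w v = 0 := hw hv
      simp [this]
    · simp [hwf]
  have hval : ∀ u : ℕ → Module.Dual ℝ (Vec d), u 1 = u1 → SnakeCond E F G u →
      ∀ i, 1 ≤ i → i ≤ d → u i f = (-1) ^ (i - 1) * u1 f := by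
    intro u h1 hu i hi
    induction i, hi using Nat.le_induction with
    | base => intro _; simp [h1]
    | succ n hn ih =>
      intro hnd
      have h2 := (hu (n + 1) (by omega) hnd).2 f f.2
      have h3 := ih (by omega)
      obtain ⟨m, rfl⟩ : ∃ m, n = m + 1 := ⟨n - 1, by omega⟩
      simp only [Nat.add_sub_cancel, LinearMap.add_apply] at h2 h3 ⊢
      rw [pow_succ]
      linarith
  have hvan : ∀ u : ℕ → Module.Dual ℝ (Vec d), u 1 = u1 → SnakeCond E F G u →
      ∀ i, 1 ≤ i → i ≤ d → ∀ v ∈ E (d - i) ⊔ G (i - 1), u i v = 0 := by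
    intro u h1 hu i hi hid
    rcases Nat.lt_or_ge 1 i with h | h
    · exact (hu i h hid).1
    · obtain rfl : i = 1 := by omega
      rw [h1]; exact hW1
  refine ⟨?_, ?_, ?_⟩
  · choose! w hw1 hw2 using hex
    have hu1w : ∀ i, 1 ≤ i → i ≤ d →
        (if i = 1 then u1 else ((-1) ^ (i - 1) * u1 f) • w i) f = (-1) ^ (i - 1) * u1 f := by
      intro i hi hid
      split_ifs with h
      · subst h; simp
      · simp [hw2 i hi hid]
    refine ⟨fun i => if i = 1 then u1 else ((-1) ^ (i - 1) * u1 f) • w i, by simp, ?_⟩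
    intro i hi hid
    refine ⟨fun v hv => ?_, hfF _ ?_⟩
    · have : i ≠ 1 := by omega
      simp [this, hw1 i (by omega) hid v hv]
    · rw [LinearMap.add_apply, hu1w i (by omega) hid, hu1w (i - 1) (by omega) (by omega)]
      obtain ⟨m, rfl⟩ : ∃ m, i = m + 2 := ⟨i - 2, by omega⟩
      simp only [Nat.add_sub_cancel, show m + 2 - 1 = m + 1 by omega]
      rw [pow_succ]; ring
  · intro u u' h1 hu h1' hu' i hi hid
    rw [← sub_eq_zero]
    apply key i (by omega) hid
    · intro v hv
      rw [LinearMap.sub_apply, (hu i hi hid).1 v hv, (hu' i hi hid).1 v hv, sub_zero]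
    · rw [LinearMap.sub_apply, hval u h1 hu i (by omega) hid, hval u' h1' hu' i (by omega) hid,
        sub_self]
  · intro u h1 hu
    have hne : ∀ i, 1 ≤ i → i ≤ d → u i ≠ 0 := by
      intro i hi hid h
      have := hval u h1 hu i hi hid
      rw [h] at this
      simp [hu1f] at this
    have hg : ∀ i, 1 ≤ i → i ≤ d → ∃ g ∈ G i, u i g ≠ 0 := by
      intro i hi hid
      by_contra! hcon
      have ht := aux_top E F G hmax (d - i) 0 i (by omega) (by omega) hid (by omega)
      have : E (d - i) ⊔ F 0 ⊔ G i ≤ LinearMap.ker (u i) := by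
        refine sup_le (sup_le ?_ ?_) hcon
        · exact fun v hv => hvan u h1 hu i hi hid v (le_sup_left (a := E (d - i)) hv)
        · rw [hz F hF]; exact bot_le
      rw [ht, top_le_iff] at this
      exact hne i hi hid (LinearMap.ker_eq_top.1 this)
    have hli : LinearIndependent ℝ (fun i : Fin d => u ((i : ℕ) + 1)) := by
      rw [Fintype.linearIndependent_iff]
      intro c hc
      have : ∀ n (hn : n < d), c ⟨n, hn⟩ = 0 := by
        intro n
        induction n using Nat.strong_induction_on with
        | _ n ih =>
          intro hn
          obtain ⟨g, hgG, hgu⟩ := hg (n + 1) (by omega) (by omega)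
          have h2 := LinearMap.congr_fun hc g
          rw [LinearMap.sum_apply, Finset.sum_eq_single ⟨n, hn⟩] at h2
          · simpa [hgu] using h2
          · rintro ⟨j, hj⟩ _ hjn
            have hjn' : j ≠ n := fun h => hjn (by simp [h])
            rcases Nat.lt_or_gt_of_ne hjn' with h | h
            · simp [ih j h hj]
            · have : u (j + 1) g = 0 :=
                hvan u h1 hu (j + 1) (by omega) (by omega) g
                  (le_sup_right (a := E (d - (j + 1))) (hG.1 (by omega) hgG))
              simp [this]
          · simp
      exact fun i => this i i.2
    refine ⟨hne, hli, ?_⟩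
    exact hli.span_eq_top_of_card_eq_finrank' (by simp [Subspace.dual_finrank_eq])
end
end

section
/- Let (E,F,G) be a triple of flags in ℝ^d with the maximum span property, and let α, β, γ ≥ 0 be integers with α + β + γ = d − 1 and α ≥ 1. Consider the lines L = (E^(α)+F^(β)+G^(γ))^⊥, L' = (E^(α−1)+F^(β)+G^(γ+1))^⊥, and L'' = (E^(α−1)+F^(β+1)+G^(γ))^⊥ in the dual space (ℝ^d)^* (each is one-dimensional by the maximum span property). Then for every u ∈ L there exist unique u' ∈ L' and u'' ∈ L'' such that u + u' + u'' = 0. -/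
noncomputable section

/-- Lemma 2.9 (snake lemma): for a maximum span triple of flags `(E,F,G)` and
`α + β + γ = d - 1` with `α ≥ 1`, consider the lines
`L = (E^(α)+F^(β)+G^(γ))^⊥`, `L' = (E^(α-1)+F^(β)+G^(γ+1))^⊥`,
`L'' = (E^(α-1)+F^(β+1)+G^(γ))^⊥` in `(ℝ^d)^*`. For every `u ∈ L` there exist
unique `u' ∈ L'` and `u'' ∈ L''` with `u + u' + u'' = 0`. -/
theorem stmt7 {d : ℕ} (E F G : ℕ → Submodule ℝ (Vec d))
    (hE : IsFlag E) (hF : IsFlag F) (hG : IsFlag G)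
    (hmax : MaxSpan ![E, F, G])
    (α β γ : ℕ) (hα : 1 ≤ α) (hsum : α + β + γ = d - 1) :
    ∀ u ∈ (E α ⊔ F β ⊔ G γ).dualAnnihilator,
      ∃! p : Module.Dual ℝ (Vec d) × Module.Dual ℝ (Vec d),
        p.1 ∈ (E (α - 1) ⊔ F β ⊔ G (γ + 1)).dualAnnihilator ∧
        p.2 ∈ (E (α - 1) ⊔ F (β + 1) ⊔ G γ).dualAnnihilator ∧
        u + p.1 + p.2 = 0 := by
  intro u hu
  have key : ∀ a b c : ℕ, a ≤ d → b ≤ d → c ≤ d →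
      Module.finrank ℝ ↥(E a ⊔ F b ⊔ G c) = min (a + b + c) d := by
    intro a b c ha hb hc
    have h := hmax ![a, b, c] (by intro j; fin_cases j <;> simpa)
    have e : (⨆ j, (![E, F, G] : Fin 3 → ℕ → Submodule ℝ (Vec d)) j ((![a, b, c] : Fin 3 → ℕ) j))
        = E a ⊔ F b ⊔ G c := by
      apply le_antisymm
      · apply iSup_le
        intro j
        fin_cases j
        · exact le_sup_of_le_left le_sup_left
        · exact le_sup_of_le_left le_sup_right
        · exact le_sup_right
      · refine sup_le (sup_le ?_ ?_) ?_
        · exact le_iSup (fun j => (![E, F, G] : Fin 3 → ℕ → Submodule ℝ (Vec d)) j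
            ((![a, b, c] : Fin 3 → ℕ) j)) 0
        · exact le_iSup (fun j => (![E, F, G] : Fin 3 → ℕ → Submodule ℝ (Vec d)) j
            ((![a, b, c] : Fin 3 → ℕ) j)) 1
        · exact le_iSup (fun j => (![E, F, G] : Fin 3 → ℕ → Submodule ℝ (Vec d)) j
            ((![a, b, c] : Fin 3 → ℕ) j)) 2
    rw [e] at h
    rw [h, Fin.sum_univ_three]
    rfl
  have hA := key (α - 1) β (γ + 1) (by omega) (by omega) (by omega)
  have hB := key (α - 1) (β + 1) γ (by omega) (by omega) (by omega)
  have hW := key (α - 1) β γ (by omega) (by omega) (by omega)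
  have hT := key (α - 1) (β + 1) (γ + 1) (by omega) (by omega) (by omega)
  have hFm : F β ≤ F (β + 1) := hF.1 (Nat.le_succ _)
  have hGm : G γ ≤ G (γ + 1) := hG.1 (Nat.le_succ _)
  have hEm : E (α - 1) ≤ E α := hE.1 (Nat.sub_le _ _)
  have hWA : E (α - 1) ⊔ F β ⊔ G γ ≤ E (α - 1) ⊔ F β ⊔ G (γ + 1) := sup_le_sup le_rfl hGm
  have hWB : E (α - 1) ⊔ F β ⊔ G γ ≤ E (α - 1) ⊔ F (β + 1) ⊔ G γ :=
    sup_le_sup (sup_le_sup le_rfl hFm) le_rfl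
  have hWL : E (α - 1) ⊔ F β ⊔ G γ ≤ E α ⊔ F β ⊔ G γ :=
    sup_le_sup (sup_le_sup hEm le_rfl) le_rfl
  have hTle : E (α - 1) ⊔ F (β + 1) ⊔ G (γ + 1) ≤
      (E (α - 1) ⊔ F β ⊔ G (γ + 1)) ⊔ (E (α - 1) ⊔ F (β + 1) ⊔ G γ) :=
    sup_le (le_sup_of_le_right le_sup_left) (le_sup_of_le_left le_sup_right)
  generalize E (α - 1) ⊔ F β ⊔ G (γ + 1) = A at *
  generalize E (α - 1) ⊔ F (β + 1) ⊔ G γ = B at *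
  generalize E (α - 1) ⊔ F β ⊔ G γ = W at *
  generalize E (α - 1) ⊔ F (β + 1) ⊔ G (γ + 1) = T at *
  have hTtop : T = ⊤ := by
    apply Submodule.eq_top_of_finrank_eq
    rw [hT, Module.finrank_fin_fun]
    omega
  have hAB : A ⊔ B = ⊤ := top_le_iff.mp (hTtop ▸ hTle)
  have hdim := Submodule.finrank_sup_add_finrank_inf_eq A B
  rw [hAB, finrank_top, Module.finrank_fin_fun] at hdim
  have hWeq : W = A ⊓ B := by
    apply Submodule.eq_of_le_of_finrank_eq (le_inf hWA hWB)
    omega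
  have hu2 : u ∈ A.dualAnnihilator ⊔ B.dualAnnihilator := by
    rw [← Subspace.dualAnnihilator_inf_eq, ← hWeq]
    exact Submodule.dualAnnihilator_anti hWL hu
  have hdisj : A.dualAnnihilator ⊓ B.dualAnnihilator = ⊥ := by
    rw [← Submodule.dualAnnihilator_sup_eq, hAB, Submodule.dualAnnihilator_top]
  obtain ⟨x, hx, y, hy, hxy⟩ := Submodule.mem_sup.mp hu2
  refine ⟨(-x, -y), ⟨neg_mem hx, neg_mem hy, ?_⟩, ?_⟩
  · rw [← hxy]; dsimp only; abel
  · rintro ⟨p, q⟩ ⟨hp, hq, hpq⟩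
    dsimp only at hp hq hpq
    have h1 : p + x = -(q + y) := by
      rw [eq_neg_iff_add_eq_zero, ← hpq, ← hxy]; abel
    have h2 : p + x ∈ A.dualAnnihilator ⊓ B.dualAnnihilator :=
      ⟨add_mem hp hx, h1 ▸ neg_mem (add_mem hq hy)⟩
    rw [hdisj, Submodule.mem_bot] at h2
    have h3 : q + y = 0 := by rw [h2] at h1; exact neg_eq_zero.mp h1.symm
    rw [eq_neg_of_add_eq_zero_left h2, eq_neg_of_add_eq_zero_left h3]
end
end

section
/- Let (e_1,…,e_d) be the standard basis of ℝ^d and let (E,F,G,H) be a quadruple of flags in ℝ^d with the maximum span property such that E^(i) = span(e_1,…,e_i) and G^(i) = span(e_{d−i+1},…,e_d) for all i, F^(1) = span(e_1+e_2+⋯+e_d), and H^(1) = span(h_1e_1+h_2e_2+⋯+h_de_d) for some real numbers h_1,…,h_d not all zero. Then h_j ≠ 0 for every j = 1,…,d, and the double ratios satisfy Z_i(E,F,G,H) = −h_i/h_{i+1} for every 1 ≤ i ≤ d−1. -/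
noncomputable section

/-- The wedge product of the concatenated vectors, viewed as a real number via
`⋀^d ℝ^d ≅ ℝ` (determinant in the standard basis); junk value `0` if the total
number of vectors is not `d`. -/
def wedgeDet {d n1 n2 n3 : ℕ} (u : Fin n1 → Vec d) (v : Fin n2 → Vec d)
    (w : Fin n3 → Vec d) : ℝ :=
  if h : n1 + n2 + n3 = d then
    (Matrix.of fun i j => (Fin.append (Fin.append u v) w) (Fin.cast h.symm j) i).det
  else 0

/-- A choice, for each `k ≤ d`, of a spanning `k`-tuple of vectors of the member
`F k` of a flag; equivalently a choice of a nonzero element of `⋀^k F^(k)`. -/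
def ChoiceFor {d : ℕ} (F : ℕ → Submodule ℝ (Vec d)) (e : (k : ℕ) → Fin k → Vec d) : Prop :=
  ∀ k, k ≤ d → Submodule.span ℝ (Set.range (e k)) = F k

/-- The `i`-th double ratio `Z_i(E,F,G,H)` computed from choices. -/
def doubleRatio {d : ℕ} (i : ℕ) (e g : (k : ℕ) → Fin k → Vec d) (f1 h1 : Vec d) : ℝ :=
  -((wedgeDet (e i) (g (d-i-1)) ![f1] * wedgeDet (e (i-1)) (g (d-i)) ![h1]) /
    (wedgeDet (e i) (g (d-i-1)) ![h1] * wedgeDet (e (i-1)) (g (d-i)) ![f1]))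

/-- The span of the first `i` standard basis vectors of `ℝ^d`. -/
def stdFirst (d i : ℕ) : Submodule ℝ (Vec d) :=
  Submodule.span ℝ {v : Vec d | ∃ j : Fin d, (j : ℕ) < i ∧ v = Pi.single j 1}

/-- The span of the last `i` standard basis vectors of `ℝ^d`. -/
def stdLast (d i : ℕ) : Submodule ℝ (Vec d) :=
  Submodule.span ℝ {v : Vec d | ∃ j : Fin d, d - i ≤ (j : ℕ) ∧ v = Pi.single j 1}

theorem key8 {d : ℕ} (p q : ℕ) (hd : p + q + 1 = d) (u : Fin p → Vec d) (v : Fin q → Vec d)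
    (hu : Submodule.span ℝ (Set.range u) = stdFirst d p)
    (hv : Submodule.span ℝ (Set.range v) = stdLast d q) :
    ∃ c : ℝ, c ≠ 0 ∧ ∀ w : Vec d, wedgeDet u v ![w] = c * w ⟨p, by omega⟩ := by
  subst hd
  let x : Vec (p + q + 1) → Fin (p + q + 1) → Vec (p + q + 1) :=
    fun w => Fin.append (Fin.append u v) ![w]
  have hxl : ∀ w, x w (Fin.last (p + q)) = w := by
    intro w
    have : Fin.last (p + q) = Fin.natAdd (p + q) (0 : Fin 1) := by ext; simp
    simp only [x, this, Fin.append_right]; rfl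
  have hxu : ∀ w k, x w (Fin.castAdd 1 (Fin.castAdd q k)) = u k := by
    intro w k
    simp only [x, Fin.append_left]
  have hxv : ∀ w k, x w (Fin.castAdd 1 (Fin.natAdd p k)) = v k := by
    intro w k
    simp only [x, Fin.append_left, Fin.append_right]
  have hupd : ∀ w, x w = Function.update (x 0) (Fin.last (p + q)) w := by
    intro w
    funext j
    refine Fin.lastCases ?_ (fun j => ?_) j
    · rw [hxl]; simp
    · rw [Function.update_of_ne (Fin.castSucc_lt_last j).ne]
      have : j.castSucc = Fin.castAdd 1 j := rfl
      simp only [x, this, Fin.append_left]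
  let L : Vec (p + q + 1) →ₗ[ℝ] ℝ :=
    (Matrix.detRowAlternating (n := Fin (p + q + 1)) (R := ℝ)).toMultilinearMap.toLinearMap
      (x 0) (Fin.last (p + q))
  have hL' : ∀ w, L w = Matrix.detRowAlternating (x w) := by
    intro w
    rw [hupd]; rfl
  have hL : ∀ w, wedgeDet u v ![w] = L w := by
    intro w
    rw [hL']
    simp only [wedgeDet, dif_pos]
    rw [← Matrix.det_transpose]
    rfl
  have hU : stdFirst (p + q + 1) p ≤ LinearMap.ker L := by
    rw [← hu, Submodule.span_le]
    rintro _ ⟨k, rfl⟩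
    change L (u k) = 0
    rw [hL']
    refine AlternatingMap.map_eq_zero_of_eq _ _ ((hxu _ k).trans (hxl _).symm) ?_
    exact (Fin.castSucc_lt_last _).ne
  have hV : stdLast (p + q + 1) q ≤ LinearMap.ker L := by
    rw [← hv, Submodule.span_le]
    rintro _ ⟨k, rfl⟩
    change L (v k) = 0
    rw [hL']
    refine AlternatingMap.map_eq_zero_of_eq _ _ ((hxv _ k).trans (hxl _).symm) ?_
    exact (Fin.castSucc_lt_last _).ne
  let P : Fin (p + q + 1) := ⟨p, by omega⟩
  refine ⟨L (Pi.single P 1), ?_, ?_⟩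
  · rw [hL']
    set y := x (Pi.single P 1) with hy
    have hspan : ⊤ ≤ Submodule.span ℝ (Set.range y) := by
      rw [← (Pi.basisFun ℝ (Fin (p + q + 1))).span_eq, Submodule.span_le]
      rintro _ ⟨j, rfl⟩
      rw [Pi.basisFun_apply]
      rcases lt_trichotomy (j : ℕ) p with hj | hj | hj
      · have : (Pi.single j 1 : Vec (p + q + 1)) ∈ stdFirst (p + q + 1) p :=
          Submodule.subset_span ⟨j, hj, rfl⟩
        rw [← hu] at this
        refine Submodule.span_mono ?_ this
        rintro _ ⟨k, rfl⟩
        exact ⟨_, hxu _ k⟩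
      · have : j = P := Fin.ext hj
        rw [this]
        exact Submodule.subset_span ⟨_, hxl _⟩
      · have : (Pi.single j 1 : Vec (p + q + 1)) ∈ stdLast (p + q + 1) q :=
          Submodule.subset_span ⟨j, by omega, rfl⟩
        rw [← hv] at this
        refine Submodule.span_mono ?_ this
        rintro _ ⟨k, rfl⟩
        exact ⟨_, hxv _ k⟩
    have hli : LinearIndependent ℝ y :=
      linearIndependent_of_top_le_span_of_card_eq_finrank hspan (by simp)
    have h1 : IsUnit (Matrix.of y) := Matrix.linearIndependent_rows_iff_isUnit.1 hli
    exact ((Matrix.isUnit_iff_isUnit_det _).1 h1).ne_zero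
  · intro w
    rw [hL]
    have hw : w = ∑ j, w j • (Pi.single j 1 : Vec (p + q + 1)) := by
      simpa using ((Pi.basisFun ℝ (Fin (p + q + 1))).sum_repr w).symm
    conv_lhs => rw [hw]
    rw [map_sum, Finset.sum_eq_single P]
    · rw [map_smul, smul_eq_mul, mul_comm]
    · intro j _ hj
      have hj' : (j : ℕ) ≠ p := fun hh => hj (Fin.ext hh)
      rw [map_smul]
      have : L (Pi.single j 1) = 0 := by
        rcases lt_or_gt_of_ne hj' with h1 | h1
        · exact hU (Submodule.subset_span ⟨j, h1, rfl⟩)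
        · exact hV (Submodule.subset_span ⟨j, by omega, rfl⟩)
      rw [this, smul_zero]
    · simp

/-- Computation in the proof of Proposition 2.14: for the normalized quadruple
of flags with `E^(i) = span(e_1,…,e_i)`, `G^(i) = span(e_{d-i+1},…,e_d)`,
`F^(1) = span(e_1+⋯+e_d)` and `H^(1) = span(h_1e_1+⋯+h_de_d)`, every `h_j` is
nonzero and `Z_i(E,F,G,H) = -h_i/h_{i+1}`. -/
theorem stmt8 {d : ℕ} (E F G H : ℕ → Submodule ℝ (Vec d))
    (hE : IsFlag E) (hF : IsFlag F) (hG : IsFlag G) (hH : IsFlag H)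
    (hmax : MaxSpan ![E, F, G, H])
    (hEstd : ∀ i, i ≤ d → E i = stdFirst d i)
    (hGstd : ∀ i, i ≤ d → G i = stdLast d i)
    (hFstd : F 1 = Submodule.span ℝ {((fun _ => 1) : Vec d)})
    (h : Fin d → ℝ) (hne : h ≠ 0)
    (hHstd : H 1 = Submodule.span ℝ {(h : Vec d)}) :
    (∀ j : Fin d, h j ≠ 0) ∧
    ∀ i : ℕ, ∀ hi1 : 1 ≤ i, ∀ hi2 : i < d,
      ∀ (e g : (k : ℕ) → Fin k → Vec d) (f1 h1 : Vec d),
        ChoiceFor E e → ChoiceFor G g →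
        f1 ∈ F 1 → f1 ≠ 0 → h1 ∈ H 1 → h1 ≠ 0 →
        doubleRatio i e g f1 h1 =
          -(h ⟨i - 1, by omega⟩ / h ⟨i, by omega⟩) := by
  have hnz : ∀ j : Fin d, h j ≠ 0 := by
    intro j hj
    have hjd := j.2
    have hm := hmax ![(j : ℕ), 0, d - j - 1, 1] (by
      intro k
      fin_cases k <;> simp <;> omega)
    have hsum : ∑ k, (![(j : ℕ), 0, d - j - 1, 1] : Fin 4 → ℕ) k = d := by
      simp [Fin.sum_univ_four]; omega
    rw [hsum, min_self] at hm
    have htop := Submodule.eq_top_of_finrank_eq (hm.trans (by simp [Vec]))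
    have hle : (⨆ k, (![E, F, G, H] : Fin 4 → ℕ → Submodule ℝ (Vec d)) k
        ((![(j : ℕ), 0, d - j - 1, 1] : Fin 4 → ℕ) k)) ≤
        LinearMap.ker (LinearMap.proj j : Vec d →ₗ[ℝ] ℝ) := by
      refine iSup_le fun k => ?_
      fin_cases k
      · change E j ≤ _
        rw [hEstd _ hjd.le, stdFirst, Submodule.span_le]
        rintro _ ⟨l, hl, rfl⟩
        have : j ≠ l := fun hh => by subst hh; omega
        simp [this]
      · change F 0 ≤ _
        rw [Submodule.finrank_eq_zero.1 (hF.2 0 (Nat.zero_le _))]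
        exact bot_le
      · change G (d - j - 1) ≤ _
        rw [hGstd _ (by omega), stdLast, Submodule.span_le]
        rintro _ ⟨l, hl, rfl⟩
        have : j ≠ l := fun hh => by subst hh; omega
        simp [this]
      · change H 1 ≤ _
        rw [hHstd, Submodule.span_le]
        rintro _ rfl
        exact hj
    rw [htop] at hle
    have := hle (show (Pi.single j 1 : Vec d) ∈ ⊤ from trivial)
    simp at this
  refine ⟨hnz, ?_⟩
  intro i hi1 hi2 e g f1 h1 he hg hf1 hf0 hh1 hh0
  obtain ⟨c1, hc1, H1⟩ := key8 i (d - i - 1) (by omega) (e i) (g (d - i - 1))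
    ((he _ (by omega)).trans (hEstd _ (by omega))) ((hg _ (by omega)).trans (hGstd _ (by omega)))
  obtain ⟨c2, hc2, H2⟩ := key8 (i - 1) (d - i) (by omega) (e (i - 1)) (g (d - i))
    ((he _ (by omega)).trans (hEstd _ (by omega))) ((hg _ (by omega)).trans (hGstd _ (by omega)))
  rw [hFstd] at hf1
  rw [hHstd] at hh1
  obtain ⟨a, rfl⟩ := Submodule.mem_span_singleton.1 hf1
  obtain ⟨b, rfl⟩ := Submodule.mem_span_singleton.1 hh1
  have ha : a ≠ 0 := by rintro rfl; simp at hf0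
  have hb : b ≠ 0 := by rintro rfl; simp at hh0
  have hz := hnz ⟨i, hi2⟩
  simp only [doubleRatio, H1, H2, Pi.smul_apply, smul_eq_mul]
  field_simp
end
end

section
/- Let (E,F,G) be a triple of flags in ℝ^d with the maximum span property, and let (e_1,…,e_d) be the standard basis of ℝ^d. Then there exists g ∈ GL(d,ℝ) such that g·E^(i) = span(e_1,…,e_i) and g·G^(i) = span(e_{d−i+1},…,e_d) for all 0 ≤ i ≤ d, and g·F^(1) = span(e_1+e_2+⋯+e_d). -/
noncomputable section

theorem flag_span {d : ℕ} (H : ℕ → Submodule ℝ (Vec d)) (hH : IsFlag H) (w : Fin d → Vec d)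
    (h1 : ∀ j : Fin d, w j ∈ H (j + 1)) (h2 : ∀ j : Fin d, w j ∉ H j) :
    ∀ i, i ≤ d → H i = Submodule.span ℝ {v : Vec d | ∃ j : Fin d, (j : ℕ) < i ∧ v = w j} := by
  intro i
  induction i with
  | zero =>
    intro _
    have h0 : H 0 = ⊥ := Submodule.finrank_eq_zero.mp (hH.2 0 (Nat.zero_le _))
    rw [h0]; symm; rw [Submodule.span_eq_bot]
    rintro x ⟨j, hj, _⟩; omega
  | succ n ih =>
    intro hn
    have ih := ih (by omega)
    apply le_antisymm
    · have hle : H n ⊔ Submodule.span ℝ {w ⟨n, hn⟩} ≤ H (n+1) := by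
        refine sup_le (hH.1 (Nat.le_succ n)) ?_
        rw [Submodule.span_singleton_le_iff_mem]; exact h1 ⟨n, hn⟩
      have hlt : H n < H n ⊔ Submodule.span ℝ {w ⟨n, hn⟩} := by
        refine lt_of_le_of_ne le_sup_left ?_
        intro h
        apply h2 ⟨n, hn⟩
        show _ ∈ H n
        rw [h]
        exact Submodule.mem_sup_right (Submodule.mem_span_singleton_self _)
      have hf := Submodule.finrank_lt_finrank_of_lt hlt
      rw [hH.2 n (by omega)] at hf
      have heq : H n ⊔ Submodule.span ℝ {w ⟨n, hn⟩} = H (n+1) := by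
        apply Submodule.eq_of_le_of_finrank_le hle
        rw [hH.2 (n+1) hn]; omega
      rw [← heq]
      refine sup_le ?_ ?_
      · rw [ih]
        apply Submodule.span_mono
        rintro x ⟨j, hj, rfl⟩
        exact ⟨j, by omega, rfl⟩
      · rw [Submodule.span_singleton_le_iff_mem]
        exact Submodule.subset_span ⟨⟨n, hn⟩, by simp, rfl⟩
    · rw [Submodule.span_le]
      rintro x ⟨j, hj, rfl⟩
      exact hH.1 (show (j:ℕ) + 1 ≤ n + 1 by omega) (h1 j)

theorem map_span_eq {d : ℕ} (b : Module.Basis (Fin d) ℝ (Vec d)) (P : Fin d → Prop) :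
    (Submodule.span ℝ {v : Vec d | ∃ j : Fin d, P j ∧ v = b j}).map
      (b.equivFun : Vec d →ₗ[ℝ] Vec d) =
    Submodule.span ℝ {v : Vec d | ∃ j : Fin d, P j ∧ v = Pi.single j 1} := by
  rw [Submodule.map_span]
  congr 1
  have hb : ∀ j, b.equivFun (b j) = Pi.single j 1 := by
    intro j; ext k
    simp [Module.Basis.equivFun_apply, Finsupp.single_apply, Pi.single_apply, eq_comm]
  ext x
  constructor
  · rintro ⟨y, ⟨j, hj, rfl⟩, rfl⟩
    exact ⟨j, hj, hb j⟩
  · rintro ⟨j, hj, rfl⟩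
    exact ⟨b j, ⟨j, hj, rfl⟩, hb j⟩

theorem basis_norm {d : ℕ} (hd : 0 < d) (E F G : ℕ → Submodule ℝ (Vec d))
    (hE : IsFlag E) (hF : IsFlag F) (hG : IsFlag G)
    (hmax : MaxSpan ![E, F, G]) :
    ∃ b : Module.Basis (Fin d) ℝ (Vec d), (∀ j : Fin d, b j ∈ E (j+1) ∧ b j ∉ E j ∧
      b j ∈ G (d - j) ∧ b j ∉ G (d - j - 1)) ∧ F 1 = Submodule.span ℝ {∑ j, b j} := by
  have hm : ∀ a b c, a ≤ d → b ≤ d → c ≤ d →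
      Module.finrank ℝ ↥(E a ⊔ F b ⊔ G c) = min (a + b + c) d := by
    intro a b c ha hb hc
    have := hmax ![a, b, c] (by intro j; fin_cases j <;> simpa)
    rw [Fin.sum_univ_three] at this
    simp only [Matrix.cons_val] at this
    rw [← this]
    have : (⨆ j, (![E, F, G] : Fin 3 → ℕ → Submodule ℝ (Vec d)) j ((![a, b, c] : Fin 3 → ℕ) j))
        = E a ⊔ F b ⊔ G c := by
      apply le_antisymm
      · refine iSup_le ?_
        intro j; fin_cases j
        · exact le_sup_of_le_left le_sup_left
        · exact le_sup_of_le_left le_sup_right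
        · exact le_sup_right
      · refine sup_le (sup_le ?_ ?_) ?_
        · exact le_iSup (fun j => (![E, F, G] : Fin 3 → ℕ → Submodule ℝ (Vec d)) j ((![a, b, c] : Fin 3 → ℕ) j)) 0
        · exact le_iSup (fun j => (![E, F, G] : Fin 3 → ℕ → Submodule ℝ (Vec d)) j ((![a, b, c] : Fin 3 → ℕ) j)) 1
        · exact le_iSup (fun j => (![E, F, G] : Fin 3 → ℕ → Submodule ℝ (Vec d)) j ((![a, b, c] : Fin 3 → ℕ) j)) 2
    rw [this]
  have hF0 : F 0 = ⊥ := Submodule.finrank_eq_zero.mp (hF.2 0 (Nat.zero_le _))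
  have hEG : ∀ a c, a ≤ d → c ≤ d → Module.finrank ℝ ↥(E a ⊔ G c) = min (a + c) d := by
    intro a c ha hc
    have := hm a 0 c ha (Nat.zero_le _) hc
    rw [hF0, sup_bot_eq] at this
    simpa using this
  have hinf : ∀ a c, a ≤ d → c ≤ d →
      min (a + c) d + Module.finrank ℝ ↥(E a ⊓ G c) = a + c := by
    intro a c ha hc
    have := Submodule.finrank_sup_add_finrank_inf_eq (E a) (G c)
    rwa [hEG a c ha hc, hE.2 a ha, hG.2 c hc] at this
  have hinf0 : ∀ a c, a + c ≤ d → E a ⊓ G c = ⊥ := by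
    intro a c h
    apply Submodule.finrank_eq_zero.mp
    have := hinf a c (by omega) (by omega)
    omega
  have hex : ∀ j : Fin d, ∃ v : Vec d, v ∈ E (j+1) ⊓ G (d - j) ∧ v ≠ 0 := by
    intro j
    have := hinf (j+1) (d - j) (by omega) (by omega)
    apply Submodule.exists_mem_ne_zero_of_ne_bot
    intro h
    rw [h, finrank_bot] at this
    omega
  choose w hw hw0 using hex
  have hw1 : ∀ j : Fin d, w j ∈ E (j+1) := fun j => (hw j).1
  have hw2 : ∀ j : Fin d, w j ∈ G (d - j) := fun j => (hw j).2
  have hw3 : ∀ j : Fin d, w j ∉ E j := by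
    intro j h
    have : w j ∈ E j ⊓ G (d - j) := ⟨h, hw2 j⟩
    rw [hinf0 _ _ (by omega)] at this
    exact hw0 j (by simpa using this)
  have hw4 : ∀ j : Fin d, w j ∉ G (d - j - 1) := by
    intro j h
    have : w j ∈ E (j+1) ⊓ G (d - j - 1) := ⟨hw1 j, h⟩
    rw [hinf0 _ _ (by omega)] at this
    exact hw0 j (by simpa using this)
  have hspan : ⊤ ≤ Submodule.span ℝ (Set.range w) := by
    have h1 := flag_span E hE w hw1 hw3 d le_rfl
    have h2 : E d = ⊤ := by
      apply Submodule.eq_top_of_finrank_eq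
      rw [hE.2 d le_rfl]; simp
    rw [← h2, h1]
    apply Submodule.span_mono
    rintro x ⟨j, _, rfl⟩
    exact ⟨j, rfl⟩
  have hli : LinearIndependent ℝ w :=
    linearIndependent_of_top_le_span_of_card_eq_finrank hspan (by simp)
  let b0 := Module.Basis.mk hli hspan
  have hb0 : ∀ j, b0 j = w j := fun j => by simp [b0]
  obtain ⟨f, hf, hf0⟩ : ∃ f ∈ F 1, f ≠ 0 := by
    apply Submodule.exists_mem_ne_zero_of_ne_bot
    intro h
    have := hF.2 1 hd
    rw [h, finrank_bot] at this
    omega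
  have hFf : F 1 = Submodule.span ℝ {f} := by
    symm
    apply Submodule.eq_of_le_of_finrank_le
    · rwa [Submodule.span_singleton_le_iff_mem]
    · rw [hF.2 1 hd, finrank_span_singleton hf0]
  have hsum : ∑ j, b0.repr f j • w j = f := by
    have := b0.sum_repr f
    simpa only [hb0] using this
  have hc : ∀ k, b0.repr f k ≠ 0 := by
    intro k hk
    have hmem : f ∈ E k ⊔ G (d - k - 1) := by
      rw [← hsum]
      apply Submodule.sum_mem
      intro j _
      rcases lt_trichotomy j k with h | h | h
      · apply Submodule.smul_mem
        exact Submodule.mem_sup_left (hE.1 (show (j:ℕ) + 1 ≤ k from h) (hw1 j))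
      · rw [h, hk, zero_smul]; exact Submodule.zero_mem _
      · apply Submodule.smul_mem
        have : (k:ℕ) < j := h
        exact Submodule.mem_sup_right (hG.1 (show d - (j:ℕ) ≤ d - k - 1 by omega) (hw2 j))
    have h1 := hm k 1 (d - k - 1) (by omega) (by omega) (by omega)
    have h2 := hEG k (d - k - 1) (by omega) (by omega)
    have h3 : E k ⊔ F 1 ⊔ G (d - k - 1) = E k ⊔ G (d - k - 1) := by
      apply le_antisymm
      · refine sup_le (sup_le le_sup_left ?_) le_sup_right
        rwa [hFf, Submodule.span_singleton_le_iff_mem]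
      · exact sup_le (le_sup_of_le_left le_sup_left) le_sup_right
    rw [h3] at h1
    omega
  have hu : ∀ j, IsUnit (b0.repr f j) := fun j => (hc j).isUnit
  refine ⟨b0.isUnitSMul hu, ?_, ?_⟩
  · intro j
    rw [Module.Basis.isUnitSMul_apply, hb0]
    simp only [Submodule.smul_mem_iff _ (hc j)]
    exact ⟨hw1 j, hw3 j, hw2 j, hw4 j⟩
  · simp only [Module.Basis.isUnitSMul_apply, hb0, hsum]
    exact hFf

/-- Normalization in the proof of Proposition 2.14: every maximum span triple of
flags `(E,F,G)` can be moved by an element `g ∈ GL(d,ℝ)` to the standard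
position `g·E^(i) = span(e_1,…,e_i)`, `g·G^(i) = span(e_{d-i+1},…,e_d)` and
`g·F^(1) = span(e_1+⋯+e_d)`. -/
theorem stmt9 {d : ℕ} (E F G : ℕ → Submodule ℝ (Vec d))
    (hE : IsFlag E) (hF : IsFlag F) (hG : IsFlag G)
    (hmax : MaxSpan ![E, F, G]) :
    ∃ T : Vec d ≃ₗ[ℝ] Vec d,
      (∀ i, i ≤ d →
        (E i).map (T : Vec d →ₗ[ℝ] Vec d) = stdFirst d i ∧
        (G i).map (T : Vec d →ₗ[ℝ] Vec d) = stdLast d i) ∧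
      (F 1).map (T : Vec d →ₗ[ℝ] Vec d) =
        Submodule.span ℝ {((fun _ => 1) : Vec d)} := by
  rcases Nat.eq_zero_or_pos d with rfl | hd
  · exact ⟨LinearEquiv.refl ℝ _, fun i _ => ⟨Subsingleton.elim _ _, Subsingleton.elim _ _⟩,
      Subsingleton.elim _ _⟩
  obtain ⟨b, hb, hbF⟩ := basis_norm hd E F G hE hF hG hmax
  refine ⟨b.equivFun, fun i hi => ⟨?_, ?_⟩, ?_⟩
  · rw [flag_span E hE b (fun j => (hb j).1) (fun j => (hb j).2.1) i hi, map_span_eq]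
    rfl
  · have h := flag_span G hG (fun j => b j.rev)
      (fun j => by
        have := (hb j.rev).2.2.1
        rwa [Fin.val_rev, show d - (d - ((j:ℕ) + 1)) = j + 1 by omega] at this)
      (fun j => by
        have := (hb j.rev).2.2.2
        rwa [Fin.val_rev, show d - (d - ((j:ℕ) + 1)) - 1 = j by omega] at this) i hi
    have h' : G i = Submodule.span ℝ {v : Vec d | ∃ j : Fin d, d - i ≤ (j : ℕ) ∧ v = b j} := by
      rw [h]
      congr 1
      ext x
      constructor
      · rintro ⟨j, hj, rfl⟩
        exact ⟨j.rev, by rw [Fin.val_rev]; omega, rfl⟩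
      · rintro ⟨j, hj, rfl⟩
        exact ⟨j.rev, by rw [Fin.val_rev]; omega, by simp⟩
    rw [h', map_span_eq]
    rfl
  · rw [hbF, Submodule.map_span, Set.image_singleton]
    congr 2
    ext k
    simp [Module.Basis.equivFun_apply, Finsupp.single_apply]
end
end

section
/- Let (E,F,G) be a triple of flags in ℝ^d with the maximum span property, and let a, b, c ≥ 1 be integers with a+b+c = d. Then the permuted triples (F,G,E) and (F,E,G) also have the maximum span property, and the triple ratios satisfy X_{a,b,c}(E,F,G) = X_{b,c,a}(F,G,E) and X_{a,b,c}(E,F,G)·X_{b,a,c}(F,E,G) = 1. -/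
noncomputable section

/-- The `(a,b,c)`-triple ratio `X_{a,b,c}(E,F,G)` computed from choices. -/
def tripleRatio {d : ℕ} (a b c : ℕ) (e f g : (k : ℕ) → Fin k → Vec d) : ℝ :=
  (wedgeDet (e (a-1)) (f b) (g (c+1)) * wedgeDet (e a) (f (b+1)) (g (c-1)) *
   wedgeDet (e (a+1)) (f (b-1)) (g c)) /
  (wedgeDet (e (a+1)) (f b) (g (c-1)) * wedgeDet (e a) (f (b-1)) (g (c+1)) *
   wedgeDet (e (a-1)) (f (b+1)) (g c))

lemma aux_finRotate_pow (n k : ℕ) (i : Fin n) :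
    (((finRotate n) ^ k) i : ℕ) = (i + k) % n := by
  rcases n with _ | n
  · exact i.elim0
  induction k with
  | zero => simp [Nat.mod_eq_of_lt i.2]
  | succ k ih =>
    rw [pow_succ', Equiv.Perm.mul_apply, finRotate_apply, Fin.val_add, ih, Fin.val_one',
      ← Nat.add_mod, add_assoc]

lemma aux_append {d p q : ℕ} (u : Fin p → Vec d) (v : Fin q → Vec d) (j : Fin (p + q)) :
    Fin.append v u (Fin.cast (add_comm p q) j) =
      Fin.append u v (((finRotate (p + q)) ^ p) j) := by
  have h := aux_finRotate_pow (p + q) p j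
  obtain ⟨j, hj⟩ := j
  simp only at h
  by_cases hq : j < q
  · rw [Nat.mod_eq_of_lt (by omega)] at h
    have e1 : (((finRotate (p + q)) ^ p) ⟨j, hj⟩) = Fin.natAdd p ⟨j, hq⟩ := by
      ext; rw [h]; simp [add_comm]
    have e2 : Fin.cast (add_comm p q) ⟨j, hj⟩ = Fin.castAdd p ⟨j, hq⟩ := by ext; simp
    rw [e1, e2, Fin.append_left, Fin.append_right]
  · have : (j + p) % (p + q) = j - q := by
      rw [Nat.mod_eq_sub_mod (by omega), Nat.mod_eq_of_lt (by omega)]; omega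
    rw [this] at h
    have e1 : (((finRotate (p + q)) ^ p) ⟨j, hj⟩) = Fin.castAdd q ⟨j - q, by omega⟩ := by
      ext; rw [h]; simp
    have e2 : Fin.cast (add_comm p q) ⟨j, hj⟩ = Fin.natAdd q ⟨j - q, by omega⟩ := by
      ext; simp; omega
    rw [e1, e2, Fin.append_left, Fin.append_right]

lemma aux_sign (p q : ℕ) :
    Equiv.Perm.sign ((finRotate (p + q)) ^ p) = (-1) ^ (p * q) := by
  rcases p with _ | p
  · simp
  have : p + 1 + q = (p + q) + 1 := by ring
  rw [this, map_pow, sign_finRotate, ← pow_mul]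
  have h : (p + q) * (p + 1) = p * (p + 1) + (p + 1) * q := by ring
  rw [Nat.add_sub_cancel, h, pow_add, (Nat.even_mul_succ_self p).neg_one_pow, one_mul]

lemma aux_swap {d p q r : ℕ} (u : Fin p → Vec d) (v : Fin q → Vec d) (w : Fin r → Vec d) :
    wedgeDet v u w = (-1) ^ (p * q) * wedgeDet u v w := by
  unfold wedgeDet
  by_cases h : p + q + r = d
  · have h' : q + p + r = d := by omega
    rw [dif_pos h, dif_pos h']
    subst h
    let σ : Equiv.Perm (Fin (p + q + r)) :=
      (finSumFinEquiv (m := p + q) (n := r)).permCongr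
        (Equiv.sumCongr ((finRotate (p + q)) ^ p) (1 : Equiv.Perm (Fin r)))
    have hs : Equiv.Perm.sign σ = (-1) ^ (p * q) := by
      simp only [σ, Equiv.Perm.sign_permCongr]
      rw [← Equiv.Perm.sumCongr, Equiv.Perm.sign_sumCongr, aux_sign]; simp
    have := Matrix.det_permute' σ (Matrix.of fun i j =>
      (Fin.append (Fin.append u v) w) (Fin.cast rfl j) i)
    rw [hs] at this
    push_cast at this
    refine Eq.trans ?_ this
    congr 1
    ext i j
    simp only [Matrix.of_apply, Matrix.submatrix_apply, id]
    congr 1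
    induction j using Fin.addCases with
    | left j =>
      have e1 : σ (Fin.castAdd r j) = Fin.castAdd r (((finRotate (p + q)) ^ p) j) := by
        simp [σ, Equiv.permCongr_apply]
      have e2 : Fin.cast h'.symm (Fin.castAdd r j) =
        Fin.castAdd r (Fin.cast (add_comm p q) j) := by ext; simp
      rw [e1, e2]
      simp only [Fin.cast_eq_self, Fin.append_left, aux_append]
    | right j =>
      have e1 : σ (Fin.natAdd (p + q) j) = Fin.natAdd (p + q) j := by
        simp [σ, Equiv.permCongr_apply]
      have e2 : Fin.cast h'.symm (Fin.natAdd (p + q) j) = Fin.natAdd (q + p) j := by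
        ext; simp [add_comm]
      rw [e1, e2]
      simp only [Fin.cast_eq_self, Fin.append_right]
  · rw [dif_neg h, dif_neg (by omega), mul_zero]

lemma aux_rot {d p q r : ℕ} (u : Fin p → Vec d) (v : Fin q → Vec d) (w : Fin r → Vec d) :
    wedgeDet v w u = (-1) ^ (p * (q + r)) * wedgeDet u v w := by
  unfold wedgeDet
  by_cases h : p + q + r = d
  · have h' : q + r + p = d := by omega
    have h'' : p + (q + r) = d := by omega
    rw [dif_pos h, dif_pos h']
    subst h''
    have := Matrix.det_permute' ((finRotate (p + (q + r))) ^ p) (Matrix.of fun i j =>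
      (Fin.append (Fin.append u v) w) (Fin.cast h.symm j) i)
    rw [aux_sign] at this
    push_cast at this
    refine Eq.trans ?_ this
    congr 1
    ext i j
    simp only [Matrix.of_apply, Matrix.submatrix_apply, id]
    have h1 := congrFun (aux_append u (Fin.append v w) j) i
    refine Eq.trans h1 ?_
    rw [Fin.append_assoc]
    rfl
  · rw [dif_neg h, dif_neg (by omega), mul_zero]

lemma aux_max {d : ℕ} (E F G : ℕ → Submodule ℝ (Vec d)) :
    MaxSpan ![E, F, G] ↔ ∀ x y z : ℕ, x ≤ d → y ≤ d → z ≤ d →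
      Module.finrank ℝ ↥(E x ⊔ F y ⊔ G z) = min (x + y + z) d := by
  have hs : ∀ x : Fin 3 → ℕ, (⨆ j : Fin 3, (![E, F, G] : Fin 3 → _) j (x j)) =
      E (x 0) ⊔ F (x 1) ⊔ G (x 2) := by
    intro x
    apply le_antisymm
    · refine iSup_le fun j => ?_
      fin_cases j
      · exact le_sup_left.trans le_sup_left
      · exact le_sup_right.trans le_sup_left
      · exact le_sup_right
    · refine sup_le (sup_le ?_ ?_) ?_
      · exact le_iSup (fun j : Fin 3 => (![E, F, G] : Fin 3 → _) j (x j)) 0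
      · exact le_iSup (fun j : Fin 3 => (![E, F, G] : Fin 3 → _) j (x j)) 1
      · exact le_iSup (fun j : Fin 3 => (![E, F, G] : Fin 3 → _) j (x j)) 2
  constructor
  · intro h x y z hx hy hz
    have h1 := h ![x, y, z] (by intro j; fin_cases j <;> assumption)
    have h2 := hs ![x, y, z]
    have h3 : E x ⊔ F y ⊔ G z = _ := h2.symm
    rw [h3]
    refine h1.trans ?_
    rw [Fin.sum_univ_three]; rfl
  · intro h x hx
    have h1 := h (x 0) (x 1) (x 2) (hx 0) (hx 1) (hx 2)
    rw [← hs x] at h1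
    refine h1.trans ?_
    rw [Fin.sum_univ_three]

lemma aux_ratio {d : ℕ} (a b c : ℕ) (e f g : (k : ℕ) → Fin k → Vec d) :
    tripleRatio (a + 1) (b + 1) (c + 1) e f g =
    (wedgeDet (e a) (f (b+1)) (g (c+1+1)) * wedgeDet (e (a+1)) (f (b+1+1)) (g c) *
     wedgeDet (e (a+1+1)) (f b) (g (c+1))) /
    (wedgeDet (e (a+1+1)) (f (b+1)) (g c) * wedgeDet (e (a+1)) (f b) (g (c+1+1)) *
     wedgeDet (e a) (f (b+1+1)) (g (c+1))) := rfl

lemma aux_ne {d : ℕ} {E F G : ℕ → Submodule ℝ (Vec d)}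
    (hmax : MaxSpan ![E, F, G]) {e f g : (k : ℕ) → Fin k → Vec d}
    (he : ChoiceFor E e) (hf : ChoiceFor F f) (hg : ChoiceFor G g)
    (p q r : ℕ) (h : p + q + r = d) : wedgeDet (e p) (f q) (g r) ≠ 0 := by
  unfold wedgeDet
  rw [dif_pos h]
  have h1 := (aux_max E F G).1 hmax p q r (by omega) (by omega) (by omega)
  rw [h, min_self, ← he p (by omega), ← hf q (by omega), ← hg r (by omega),
    ← Submodule.span_union, ← Submodule.span_union] at h1
  have h2 := Submodule.eq_top_of_finrank_eq (h1.trans (by simp : d = Module.finrank ℝ (Vec d)))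
  set M : Matrix (Fin d) (Fin d) ℝ := Matrix.of fun i j =>
    (Fin.append (Fin.append (e p) (f q)) (g r)) (Fin.cast h.symm j) i with hM
  have hr : Submodule.span ℝ (Set.range M.col) = ⊤ := by
    rw [eq_top_iff, ← h2]
    apply Submodule.span_mono
    rintro x ((⟨i, rfl⟩ | ⟨i, rfl⟩) | ⟨i, rfl⟩)
    · exact ⟨Fin.cast h (Fin.castAdd r (Fin.castAdd q i)), by ext; simp [hM, Matrix.col]⟩
    · exact ⟨Fin.cast h (Fin.castAdd r (Fin.natAdd p i)), by ext; simp [hM, Matrix.col]⟩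
    · exact ⟨Fin.cast h (Fin.natAdd (p + q) i), by ext; simp [hM, Matrix.col]⟩
  have hl : LinearIndependent ℝ M.col :=
    linearIndependent_of_top_le_span_of_card_eq_finrank hr.ge (by simp)
  rw [Matrix.linearIndependent_cols_iff_isUnit] at hl
  exact ((Matrix.isUnit_iff_isUnit_det M).1 hl).ne_zero

lemma aux_alg1 (s t r x y z x' y' z' : ℝ) (hs : s ≠ 0) (ht : t ≠ 0) (hr : r ≠ 0) :
    x * y * z / (x' * y' * z') =
      ((r * z) * (s * x) * (t * y)) / ((s * z') * (r * x') * (t * y')) := by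
  rw [show (r * z) * (s * x) * (t * y) = (s * t * r) * (x * y * z) by ring,
    show (s * z') * (r * x') * (t * y') = (s * t * r) * (x' * y' * z') by ring,
    mul_div_mul_left _ _ (by positivity)]

/-- Remark 2.5 (symmetries of triple ratios): for a maximum span triple `(E,F,G)`
the permuted triples `(F,G,E)` and `(F,E,G)` have the maximum span property and
`X_{a,b,c}(E,F,G) = X_{b,c,a}(F,G,E)` and
`X_{a,b,c}(E,F,G) · X_{b,a,c}(F,E,G) = 1`. -/
theorem stmt11 {d : ℕ} (E F G : ℕ → Submodule ℝ (Vec d))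
    (hE : IsFlag E) (hF : IsFlag F) (hG : IsFlag G)
    (hmax : MaxSpan ![E, F, G])
    (a b c : ℕ) (ha : 1 ≤ a) (hb : 1 ≤ b) (hc : 1 ≤ c) (habc : a + b + c = d) :
    MaxSpan ![F, G, E] ∧ MaxSpan ![F, E, G] ∧
    ∀ e f g : (k : ℕ) → Fin k → Vec d,
      ChoiceFor E e → ChoiceFor F f → ChoiceFor G g →
      tripleRatio a b c e f g = tripleRatio b c a f g e ∧
      tripleRatio a b c e f g * tripleRatio b a c f e g = 1 := by
  have key := (aux_max E F G).1 hmax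
  refine ⟨(aux_max F G E).2 ?_, (aux_max F E G).2 ?_, ?_⟩
  · intro x y z hx hy hz
    rw [show F x ⊔ G y ⊔ E z = E z ⊔ F x ⊔ G y by ac_rfl, key z x y hz hx hy]
    congr 1; ring
  · intro x y z hx hy hz
    rw [show F x ⊔ E y ⊔ G z = E y ⊔ F x ⊔ G z by ac_rfl, key y x z hy hx hz]
    congr 1; ring
  · intro e f g he hf hg
    obtain ⟨a, rfl⟩ := Nat.exists_eq_add_of_le' ha
    obtain ⟨b, rfl⟩ := Nat.exists_eq_add_of_le' hb
    obtain ⟨c, rfl⟩ := Nat.exists_eq_add_of_le' hc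
    have n1 := aux_ne hmax he hf hg a (b + 1) (c + 1 + 1) (by omega)
    have n2 := aux_ne hmax he hf hg (a + 1) (b + 1 + 1) c (by omega)
    have n3 := aux_ne hmax he hf hg (a + 1 + 1) b (c + 1) (by omega)
    have n4 := aux_ne hmax he hf hg (a + 1 + 1) (b + 1) c (by omega)
    have n5 := aux_ne hmax he hf hg (a + 1) b (c + 1 + 1) (by omega)
    have n6 := aux_ne hmax he hf hg a (b + 1 + 1) (c + 1) (by omega)
    constructor
    · rw [aux_ratio, aux_ratio]
      rw [aux_rot (e a) (f (b + 1)), aux_rot (e (a + 1)) (f (b + 1 + 1)),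
        aux_rot (e (a + 1 + 1)) (f b), aux_rot (e (a + 1 + 1)) (f (b + 1)),
        aux_rot (e (a + 1)) (f b), aux_rot (e a) (f (b + 1 + 1))]
      rw [show b + 1 + 1 + (c + 1) = b + 1 + (c + 1 + 1) by ring,
        show b + 1 + 1 + c = b + (c + 1 + 1) by ring,
        show b + (c + 1) = b + 1 + c by ring]
      apply aux_alg1 <;> exact pow_ne_zero _ (by norm_num)
    · rw [aux_ratio, aux_ratio]
      rw [aux_swap (e a) (f (b + 1)), aux_swap (e (a + 1)) (f (b + 1 + 1)),
        aux_swap (e (a + 1 + 1)) (f b), aux_swap (e (a + 1 + 1)) (f (b + 1)),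
        aux_swap (e (a + 1)) (f b), aux_swap (e a) (f (b + 1 + 1))]
      have hs : ((-1 : ℝ) ^ ((a + 1 + 1) * (b + 1)) * (-1) ^ ((a + 1) * b) * (-1) ^ (a * (b + 1 + 1)))
        = (-1) ^ (a * (b + 1)) * (-1) ^ ((a + 1) * (b + 1 + 1)) * (-1) ^ ((a + 1 + 1) * b) := by
        rw [← pow_add, ← pow_add, ← pow_add, ← pow_add]
        congr 1; ring
      have hne : (-1 : ℝ) ^ (a * (b + 1)) * (-1) ^ ((a + 1) * (b + 1 + 1)) * (-1) ^ ((a + 1 + 1) * b) ≠ 0 := by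
        simp
      generalize (-1 : ℝ) ^ ((a + 1 + 1) * (b + 1)) = s1 at *
      generalize (-1 : ℝ) ^ ((a + 1) * b) = s2 at *
      generalize (-1 : ℝ) ^ (a * (b + 1 + 1)) = s3 at *
      generalize (-1 : ℝ) ^ (a * (b + 1)) = t1 at *
      generalize (-1 : ℝ) ^ ((a + 1) * (b + 1 + 1)) = t2 at *
      generalize (-1 : ℝ) ^ ((a + 1 + 1) * b) = t3 at *
      generalize wedgeDet (e a) (f (b + 1)) (g (c + 1 + 1)) = x1 at *
      generalize wedgeDet (e (a + 1)) (f (b + 1 + 1)) (g c) = x2 at *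
      generalize wedgeDet (e (a + 1 + 1)) (f b) (g (c + 1)) = x3 at *
      generalize wedgeDet (e (a + 1 + 1)) (f (b + 1)) (g c) = x4 at *
      generalize wedgeDet (e (a + 1)) (f b) (g (c + 1 + 1)) = x5 at *
      generalize wedgeDet (e a) (f (b + 1 + 1)) (g (c + 1)) = x6 at *
      have hx : x1 * x2 * x3 ≠ 0 := by simp [n1, n2, n3]
      have hy : x4 * x5 * x6 ≠ 0 := by simp [n4, n5, n6]
      have hd := mul_ne_zero hy (mul_ne_zero hne hx)
      rw [div_mul_div_comm, div_eq_one_iff_eq]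
      · linear_combination (x1 * x2 * x3 * x4 * x5 * x6) * hs
      · convert hd using 1; ring
end
end

section
/- Let (E,F,G,H) be a quadruple of flags in ℝ^d with the maximum span property, and let 0 < i < d. Then the dihedrally permuted quadruples (G,H,E,F) and (E,H,G,F) also have the maximum span property, and the double ratios satisfy Z_i(E,F,G,H) = Z_{d−i}(G,H,E,F) and Z_i(E,F,G,H)·Z_i(E,H,G,F) = 1. -/
noncomputable section

theorem maxSpan_perm {d t : ℕ} (F F' : Fin t → ℕ → Submodule ℝ (Vec d))
    (σ : Equiv.Perm (Fin t)) (hF : ∀ j, F' j = F (σ j)) (h : MaxSpan F) : MaxSpan F' := by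
  intro a ha
  have h1 := h (a ∘ σ.symm) (fun j => ha _)
  have h2 : (⨆ j, F' j (a j)) = ⨆ j, F j ((a ∘ σ.symm) j) := by
    rw [← σ.iSup_comp (g := fun j => F j ((a ∘ σ.symm) j))]
    simp [hF]
  have h3 : ∑ j, a j = ∑ j, (a ∘ σ.symm) j := by
    rw [← Equiv.sum_comp σ (a ∘ σ.symm)]
    simp
  rw [h2, h3]
  exact h1

theorem wedgeDet_swap (d n1 n2 n3 : ℕ) : ∃ s : ℝ, s ≠ 0 ∧
    ∀ (u : Fin n1 → Vec d) (v : Fin n2 → Vec d) (w : Fin n3 → Vec d),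
      wedgeDet v u w = s * wedgeDet u v w := by
  by_cases h : n1 + n2 + n3 = d
  · have h' : n2 + n1 + n3 = d := by omega
    let p : Fin n2 ⊕ Fin n1 ≃ Fin n1 ⊕ Fin n2 := Equiv.sumComm _ _
    let σ : Fin d ≃ Fin d :=
      (finCongr h'.symm).trans <| finSumFinEquiv.symm.trans <|
        (Equiv.sumCongr (finSumFinEquiv.symm.trans <| p.trans finSumFinEquiv)
          (Equiv.refl _)).trans <| finSumFinEquiv.trans (finCongr h)
    refine ⟨((Equiv.Perm.sign σ : ℤˣ) : ℤ), ?_, ?_⟩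
    · exact_mod_cast (Equiv.Perm.sign σ).ne_zero
    · intro u v w
      unfold wedgeDet
      rw [dif_pos h, dif_pos h', ← Matrix.det_permute']
      congr 1
      ext i j
      simp only [Matrix.of_apply, Matrix.submatrix_apply, id]
      congr 1
      obtain ⟨x, rfl⟩ := (finCongr h').surjective j
      obtain ⟨x, rfl⟩ := finSumFinEquiv.surjective x
      rcases x with x | x
      · obtain ⟨x, rfl⟩ := finSumFinEquiv.surjective x
        rcases x with x | x <;> simp [σ, p]
      · simp [σ, p]
  · have h' : ¬ (n2 + n1 + n3 = d) := by omega
    refine ⟨1, one_ne_zero, fun u v w => ?_⟩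
    simp [wedgeDet, h, h']

theorem range_append' {α : Type*} {m n : ℕ} (u : Fin m → α) (v : Fin n → α) :
    Set.range (Fin.append u v) = Set.range u ∪ Set.range v := by
  ext x
  constructor
  · rintro ⟨j, rfl⟩
    refine Fin.addCases (fun i => ?_) (fun i => ?_) j <;> simp
  · rintro (⟨j, rfl⟩ | ⟨j, rfl⟩)
    · exact ⟨Fin.castAdd _ j, by simp⟩
    · exact ⟨Fin.natAdd _ j, by simp⟩

theorem wedgeDet_ne_zero {d n1 n2 n3 : ℕ} (u : Fin n1 → Vec d) (v : Fin n2 → Vec d)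
    (w : Fin n3 → Vec d) (h : n1 + n2 + n3 = d)
    (hs : Submodule.span ℝ (Set.range u) ⊔ Submodule.span ℝ (Set.range v) ⊔
      Submodule.span ℝ (Set.range w) = ⊤) : wedgeDet u v w ≠ 0 := by
  unfold wedgeDet
  rw [dif_pos h]
  set c : Fin d → Vec d := fun j => (Fin.append (Fin.append u v) w) (Fin.cast h.symm j) with hc
  have hr : Set.range c = Set.range u ∪ Set.range v ∪ Set.range w := by
    rw [← range_append', ← range_append']
    exact (finCongr h.symm).surjective.range_comp _
  have hli : LinearIndependent ℝ c := by
    apply linearIndependent_of_top_le_span_of_card_eq_finrank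
    · rw [hr, Submodule.span_union, Submodule.span_union, hs]
    · simp
  have hM : IsUnit (Matrix.of c) := Matrix.linearIndependent_rows_iff_isUnit.mp hli
  have : (Matrix.of fun i j => c j i) = (Matrix.of c).transpose := rfl
  change (Matrix.of fun i j => c j i).det ≠ 0
  rw [this, Matrix.det_transpose]
  exact ((Matrix.isUnit_iff_isUnit_det _).mp hM).ne_zero

theorem span_line {d : ℕ} (hd : 1 ≤ d) {F : ℕ → Submodule ℝ (Vec d)} (hF : IsFlag F)
    {f : Vec d} (hf : f ∈ F 1) (h0 : f ≠ 0) :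
    Submodule.span ℝ (Set.range ![f]) = F 1 := by
  have : Set.range ![f] = {f} := by simp
  rw [this]
  apply Submodule.eq_of_le_of_finrank_eq
  · simpa [Submodule.span_le] using hf
  · rw [finrank_span_singleton h0, hF.2 1 hd]

theorem key {d : ℕ} {E F G H : ℕ → Submodule ℝ (Vec d)}
    (hF : IsFlag F) (hH : IsFlag H)
    (hmax : MaxSpan ![E, F, G, H]) {e g : (k : ℕ) → Fin k → Vec d} {f : Vec d}
    (he : ChoiceFor E e) (hg : ChoiceFor G g) (hf : f ∈ F 1) (h0 : f ≠ 0)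
    (a b : ℕ) (hab : a + b + 1 = d) : wedgeDet (e a) (g b) ![f] ≠ 0 := by
  apply wedgeDet_ne_zero _ _ _ hab
  rw [span_line (by omega) hF hf h0, he a (by omega), hg b (by omega)]
  have hb : H 0 = ⊥ := Submodule.finrank_eq_zero.mp (hH.2 0 (by omega))
  have h := hmax ![a, 1, b, 0] (by
    intro j; fin_cases j <;> simp <;> omega)
  have hsup : (⨆ j, (![E, F, G, H] : Fin 4 → ℕ → Submodule ℝ (Vec d)) j
      ((![a, 1, b, 0] : Fin 4 → ℕ) j)) ≤ E a ⊔ G b ⊔ F 1 := by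
    apply iSup_le
    intro j
    fin_cases j
    · exact le_sup_left.trans le_sup_left
    · exact le_sup_right
    · exact le_sup_right.trans le_sup_left
    · simp [hb]
  apply top_le_iff.mp
  refine le_trans (le_of_eq ?_) hsup
  symm
  apply Submodule.eq_top_of_finrank_eq
  rw [h]
  simp [Fin.sum_univ_four]
  omega

/-- Remark 2.7 (symmetries of double ratios): for a maximum span quadruple
`(E,F,G,H)`, the dihedrally permuted quadruples `(G,H,E,F)` and `(E,H,G,F)` have
the maximum span property and `Z_i(E,F,G,H) = Z_{d-i}(G,H,E,F)` and
`Z_i(E,F,G,H) · Z_i(E,H,G,F) = 1`. -/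
theorem stmt12 {d : ℕ} (E F G H : ℕ → Submodule ℝ (Vec d))
    (hE : IsFlag E) (hF : IsFlag F) (hG : IsFlag G) (hH : IsFlag H)
    (hmax : MaxSpan ![E, F, G, H])
    (i : ℕ) (hi1 : 1 ≤ i) (hi2 : i < d) :
    MaxSpan ![G, H, E, F] ∧ MaxSpan ![E, H, G, F] ∧
    ∀ (e g : (k : ℕ) → Fin k → Vec d) (f1 h1 : Vec d),
      ChoiceFor E e → ChoiceFor G g →
      f1 ∈ F 1 → f1 ≠ 0 → h1 ∈ H 1 → h1 ≠ 0 →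
      doubleRatio i e g f1 h1 = doubleRatio (d - i) g e h1 f1 ∧
      doubleRatio i e g f1 h1 * doubleRatio i e g h1 f1 = 1 := by
  have hm2 : MaxSpan ![E, H, G, F] := by
    refine maxSpan_perm _ _ (Equiv.swap 1 3) ?_ hmax
    intro j; fin_cases j <;> rfl
  refine ⟨?_, hm2, ?_⟩
  · refine maxSpan_perm _ _ (Equiv.swap 0 2 * Equiv.swap 1 3) ?_ hmax
    intro j; fin_cases j <;> rfl
  intro e g f1 h1 he hg hf hf0 hh hh0
  have n1 := key hF hH hmax he hg hf hf0 i (d-i-1) (by omega)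
  have n2 := key hF hH hmax he hg hf hf0 (i-1) (d-i) (by omega)
  have n3 := key hH hF hm2 he hg hh hh0 i (d-i-1) (by omega)
  have n4 := key hH hF hm2 he hg hh hh0 (i-1) (d-i) (by omega)
  have e1 : d - (d - i) = i := by omega
  constructor
  · unfold doubleRatio
    rw [e1]
    obtain ⟨s, hs, hs'⟩ := wedgeDet_swap d i (d-i-1) 1
    obtain ⟨t, ht, ht'⟩ := wedgeDet_swap d (i-1) (d-i) 1
    rw [hs', hs', ht', ht']
    field_simp
  · unfold doubleRatio
    field_simp
end
end

section
/- Let d ≥ 3 and let Θ°_d = {(a,b,c) ∈ ℤ³ : a,b,c ≥ 1, a+b+c = d}. The assignment of triple ratios induces a bijection between configurations of three maximum-span flags and (ℝ∖{0})^{Θ°_d}; that is: (i) if (E,F,G) and (E',F',G') are triples of flags in ℝ^d with the maximum span property such that X_{a,b,c}(E,F,G) = X_{a,b,c}(E',F',G') for all (a,b,c) ∈ Θ°_d, then there exists g ∈ GL(d,ℝ) with g·E^(i) = E'^(i), g·F^(i) = F'^(i), g·G^(i) = G'^(i) for all i; and (ii) for every function x : Θ°_d → ℝ∖{0} there exists a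 triple of flags (E,F,G) in ℝ^d with the maximum span property such that X_{a,b,c}(E,F,G) = x(a,b,c) for all (a,b,c) ∈ Θ°_d. -/
noncomputable section

def epsS (n1 n2 n3 d : ℕ) (h : n1 + n2 + n3 = d) : (Fin n1 ⊕ Fin n2) ⊕ Fin n3 ≃ Fin d :=
  ((Equiv.sumCongr finSumFinEquiv (Equiv.refl _)).trans finSumFinEquiv).trans (finCongr h)

lemma wedgeDet_eq {d n1 n2 n3 : ℕ} (h : n1 + n2 + n3 = d) (u : Fin n1 → Vec d)
    (v : Fin n2 → Vec d) (w : Fin n3 → Vec d) :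
    wedgeDet u v w = (Matrix.of fun i j : (Fin n1 ⊕ Fin n2) ⊕ Fin n3 =>
      Sum.elim (Sum.elim u v) w j (epsS n1 n2 n3 d h i)).det := by
  unfold wedgeDet
  rw [dif_pos h, ← Matrix.det_submatrix_equiv_self (epsS n1 n2 n3 d h)]
  congr 1
  ext i j
  subst h
  rcases j with (j | j) | j <;> simp [epsS]

lemma wedgeDet_change {d n1 n2 n3 : ℕ} (h : n1 + n2 + n3 = d) (T : Vec d →ₗ[ℝ] Vec d)
    (u u' : Fin n1 → Vec d) (v v' : Fin n2 → Vec d) (w w' : Fin n3 → Vec d)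
    (P : Matrix (Fin n1) (Fin n1) ℝ) (Q : Matrix (Fin n2) (Fin n2) ℝ)
    (R : Matrix (Fin n3) (Fin n3) ℝ)
    (hu : ∀ i, u' i = ∑ j, P j i • T (u j)) (hv : ∀ i, v' i = ∑ j, Q j i • T (v j))
    (hw : ∀ i, w' i = ∑ j, R j i • T (w j)) :
    wedgeDet u' v' w' = LinearMap.det T * P.det * Q.det * R.det * wedgeDet u v w := by
  rw [wedgeDet_eq h, wedgeDet_eq h]
  set ε := epsS n1 n2 n3 d h
  have hT : LinearMap.det T = ((LinearMap.toMatrix' T).submatrix ε ε).det := by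
    rw [Matrix.det_submatrix_equiv_self, LinearMap.det_toMatrix']
  have hB : P.det * Q.det * R.det =
      (Matrix.fromBlocks (Matrix.fromBlocks P 0 0 Q) 0 0 R).det := by
    rw [Matrix.det_fromBlocks_zero₂₁, Matrix.det_fromBlocks_zero₂₁]
  have key : ∀ x : Vec d, ∀ i, T x (ε i) =
      ∑ k, (LinearMap.toMatrix' T).submatrix ε ε i k * x (ε k) := by
    intro x i
    have := congrFun (LinearMap.toMatrix'_mulVec T x) (ε i)
    rw [← this]
    simp only [Matrix.mulVec, dotProduct, Matrix.submatrix_apply]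
    exact (Equiv.sum_comp ε (fun k => LinearMap.toMatrix' T (ε i) k * x k)).symm
  generalize (LinearMap.toMatrix' T).submatrix ε ε = A at hT key
  have : (Matrix.of fun i j : (Fin n1 ⊕ Fin n2) ⊕ Fin n3 =>
      Sum.elim (Sum.elim u' v') w' j (ε i)) =
      (A * (Matrix.of fun i j : (Fin n1 ⊕ Fin n2) ⊕ Fin n3 =>
      Sum.elim (Sum.elim u v) w j (ε i))) *
      (Matrix.fromBlocks (Matrix.fromBlocks P 0 0 Q) 0 0 R) := by
    ext i j
    rw [Matrix.mul_apply]
    rcases j with (j | j) | j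
    · simp [hu, Matrix.mul_apply, key, mul_comm]
    · simp [hv, Matrix.mul_apply, key, mul_comm]
    · simp [hw, Matrix.mul_apply, key, mul_comm]
  rw [this, Matrix.det_mul, Matrix.det_mul, ← hB, hT]
  ring

lemma wedgeDet_ne_zero_iff {d n1 n2 n3 : ℕ} (h : n1 + n2 + n3 = d) (u : Fin n1 → Vec d)
    (v : Fin n2 → Vec d) (w : Fin n3 → Vec d) :
    wedgeDet u v w ≠ 0 ↔ Submodule.span ℝ (Set.range u) ⊔ Submodule.span ℝ (Set.range v) ⊔
      Submodule.span ℝ (Set.range w) = ⊤ := by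
  have h1 : Submodule.span ℝ (Set.range u) ⊔ Submodule.span ℝ (Set.range v) ⊔
      Submodule.span ℝ (Set.range w) =
      Submodule.span ℝ (Set.range (fun j => Sum.elim (Sum.elim u v) w ((epsS n1 n2 n3 d h).symm j))) := by
    rw [← Submodule.span_union, ← Submodule.span_union]
    congr 1
    have : (fun j => Sum.elim (Sum.elim u v) w ((epsS n1 n2 n3 d h).symm j)) =
      Sum.elim (Sum.elim u v) w ∘ (epsS n1 n2 n3 d h).symm := rfl
    rw [this, (epsS n1 n2 n3 d h).symm.surjective.range_comp, Set.Sum.elim_range,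
      Set.Sum.elim_range]
  rw [h1, wedgeDet_eq h, ← Matrix.det_submatrix_equiv_self (epsS n1 n2 n3 d h).symm,
    ← isUnit_iff_ne_zero, ← Matrix.isUnit_iff_isUnit_det, ← Matrix.linearIndependent_cols_iff_isUnit]
  have h2 : ((Matrix.of fun i j : (Fin n1 ⊕ Fin n2) ⊕ Fin n3 =>
      Sum.elim (Sum.elim u v) w j (epsS n1 n2 n3 d h i)).submatrix (epsS n1 n2 n3 d h).symm
      (epsS n1 n2 n3 d h).symm).col =
      (fun j => Sum.elim (Sum.elim u v) w ((epsS n1 n2 n3 d h).symm j)) := by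
    ext i j
    simp [Matrix.col]
  rw [h2]
  constructor
  · intro hl
    exact hl.span_eq_top_of_card_eq_finrank' (by simp)
  · intro hs
    exact linearIndependent_of_top_le_span_of_card_eq_finrank hs.ge (by simp)

lemma exists_change {d k : ℕ} (T : Vec d →ₗ[ℝ] Vec d) (u u' : Fin k → Vec d)
    (hs : Submodule.span ℝ (Set.range u') ≤ (Submodule.span ℝ (Set.range u)).map T)
    (hl : LinearIndependent ℝ u') :
    ∃ P : Matrix (Fin k) (Fin k) ℝ, P.det ≠ 0 ∧ ∀ i, u' i = ∑ j, P j i • T (u j) := by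
  have : ∀ i, ∃ c : Fin k → ℝ, ∑ j, c j • T (u j) = u' i := by
    intro i
    have := hs (Submodule.subset_span (Set.mem_range_self i))
    rw [Submodule.map_span, ← Set.range_comp] at this
    exact (Submodule.mem_span_range_iff_exists_fun ℝ).1 this
  choose c hc using this
  refine ⟨Matrix.of fun j i => c i j, ?_, fun i => by simp [hc]⟩
  intro h0
  obtain ⟨x, hx, hx0⟩ := Matrix.exists_mulVec_eq_zero_iff.2 h0
  apply hx
  have := Fintype.linearIndependent_iff.1 hl x (by
    have h1 : ∀ j, ∑ i, c i j * x i = 0 := fun j => by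
      simpa [Matrix.mulVec, dotProduct] using congrFun hx0 j
    simp_rw [← hc, Finset.smul_sum, smul_smul]
    rw [Finset.sum_comm]
    simp_rw [← Finset.sum_smul, mul_comm (x _), h1]
    simp)
  exact funext this

lemma ChoiceFor.li {d : ℕ} {F : ℕ → Submodule ℝ (Vec d)} {e : (k : ℕ) → Fin k → Vec d}
    (hF : IsFlag F) (he : ChoiceFor F e) {k : ℕ} (hk : k ≤ d) : LinearIndependent ℝ (e k) := by
  rw [linearIndependent_iff_card_eq_finrank_span, Set.finrank, he k hk, hF.2 k hk]
  simp

lemma choice_change {d : ℕ} (T : Vec d →ₗ[ℝ] Vec d) {F F' : ℕ → Submodule ℝ (Vec d)}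
    {e e' : (k : ℕ) → Fin k → Vec d} (hF' : IsFlag F')
    (he : ChoiceFor F e) (he' : ChoiceFor F' e') (hm : ∀ k, k ≤ d → (F k).map T = F' k) :
    ∀ k, ∃ P : Matrix (Fin k) (Fin k) ℝ, k ≤ d → P.det ≠ 0 ∧
      ∀ i, e' k i = ∑ j, P j i • T (e k j) := by
  intro k
  by_cases hk : k ≤ d
  · obtain ⟨P, h⟩ := exists_change T (e k) (e' k) (by rw [he k hk, he' k hk, hm k hk])
      (he'.li hF' hk)
    exact ⟨P, fun _ => h⟩
  · exact ⟨1, fun h => absurd h hk⟩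

lemma tripleRatio_change {d : ℕ} (T : Vec d ≃ₗ[ℝ] Vec d) {E F G E' F' G' : ℕ → Submodule ℝ (Vec d)}
    {e f g e' f' g' : (k : ℕ) → Fin k → Vec d} (hE' : IsFlag E') (hF' : IsFlag F')
    (hG' : IsFlag G')
    (he : ChoiceFor E e) (he' : ChoiceFor E' e')
    (hf : ChoiceFor F f) (hf' : ChoiceFor F' f')
    (hg : ChoiceFor G g) (hg' : ChoiceFor G' g')
    (hEm : ∀ k, k ≤ d → (E k).map (T : Vec d →ₗ[ℝ] Vec d) = E' k)
    (hFm : ∀ k, k ≤ d → (F k).map (T : Vec d →ₗ[ℝ] Vec d) = F' k)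
    (hGm : ∀ k, k ≤ d → (G k).map (T : Vec d →ₗ[ℝ] Vec d) = G' k)
    {a b c : ℕ} (ha : 1 ≤ a) (hb : 1 ≤ b) (hc : 1 ≤ c) (h : a + b + c = d) :
    tripleRatio a b c e' f' g' = tripleRatio a b c e f g := by
  choose P hP using choice_change _ hE' he he' hEm
  choose Q hQ using choice_change _ hF' hf hf' hFm
  choose R hR using choice_change _ hG' hg hg' hGm
  have key : ∀ a b c, a + b + c = d → wedgeDet (e' a) (f' b) (g' c) =
      LinearMap.det (T : Vec d →ₗ[ℝ] Vec d) * (P a).det * (Q b).det * (R c).det *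
        wedgeDet (e a) (f b) (g c) := fun a b c h =>
    wedgeDet_change h _ _ _ _ _ _ _ _ _ _ (hP a (by omega)).2 (hQ b (by omega)).2
      (hR c (by omega)).2
  have hT : LinearMap.det (T : Vec d →ₗ[ℝ] Vec d) ≠ 0 := T.isUnit_det'.ne_zero
  unfold tripleRatio
  rw [key _ _ _ (by omega), key _ _ _ (by omega), key _ _ _ (by omega), key _ _ _ (by omega),
    key _ _ _ (by omega), key _ _ _ (by omega)]
  set t := LinearMap.det (T : Vec d →ₗ[ℝ] Vec d)
  have p1 := (hP (a-1) (by omega)).1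
  have p2 := (hP a (by omega)).1
  have p3 := (hP (a+1) (by omega)).1
  have q1 := (hQ (b-1) (by omega)).1
  have q2 := (hQ b (by omega)).1
  have q3 := (hQ (b+1) (by omega)).1
  have r1 := (hR (c-1) (by omega)).1
  have r2 := (hR c (by omega)).1
  have r3 := (hR (c+1) (by omega)).1
  rw [← mul_div_mul_left _ (wedgeDet (e (a+1)) (f b) (g (c-1)) * wedgeDet (e a) (f (b-1)) (g (c+1)) *
   wedgeDet (e (a-1)) (f (b+1)) (g c)) (c := t * t * t * ((P (a-1)).det * (P a).det * (P (a+1)).det) *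
    ((Q (b-1)).det * (Q b).det * (Q (b+1)).det) * ((R (c-1)).det * (R c).det * (R (c+1)).det))
    (by simp [*])]
  congr 1 <;> ring

def minorM (M : ℕ → ℕ → ℝ) (a b : ℕ) : ℝ :=
  (Matrix.of fun i j : Fin b => M (a + i) j).det

lemma minorM_congr {M M' : ℕ → ℕ → ℝ} {a b : ℕ}
    (h : ∀ i j, i < b → j < b → M (a + i) j = M' (a + i) j) : minorM M a b = minorM M' a b := by
  unfold minorM
  congr 1
  ext i j
  exact h i j i.2 j.2

lemma minorM_zero (M : ℕ → ℕ → ℝ) (a : ℕ) : minorM M a 0 = 1 := by simp [minorM]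

lemma minorM_one (M : ℕ → ℕ → ℝ) (a : ℕ) : minorM M a 1 = M a 0 := by simp [minorM]

lemma minorM_succ {M M' : ℕ → ℕ → ℝ} {a b : ℕ}
    (h : ∀ i j, i < b + 1 → j < b + 1 → (i ≠ b ∨ j ≠ b) → M (a + i) j = M' (a + i) j) :
    minorM M a (b+1) - M (a + b) b * minorM M a b =
      minorM M' a (b+1) - M' (a + b) b * minorM M' a b := by
  have key : ∀ N : ℕ → ℕ → ℝ, minorM N a (b+1) - N (a + b) b * minorM N a b =
      ∑ j : Fin b, (-1) ^ (b + (j:ℕ)) * N (a + b) j *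
        (Matrix.of fun i k : Fin b => N (a + i) (j.castSucc.succAbove k)).det := by
    intro N
    unfold minorM
    rw [Matrix.det_succ_row _ (Fin.last b), Fin.sum_univ_castSucc]
    have h1 : ((-1:ℝ)) ^ (b + b) = 1 := by rw [← two_mul, pow_mul]; simp
    have h2 : ((Matrix.of fun i j : Fin (b+1) => N (a + i) j).submatrix (Fin.last b).succAbove
      (Fin.last b).succAbove) = (Matrix.of fun i j : Fin b => N (a + i) j) := by
      ext i j; simp
    rw [h2]
    simp only [Fin.val_last, h1, Matrix.of_apply, one_mul, add_sub_cancel_right, Fin.val_castSucc]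
    refine Finset.sum_congr rfl fun j _ => ?_
    congr 2
    ext i k
    simp
  rw [key, key]
  refine Finset.sum_congr rfl fun j _ => ?_
  rw [h b j (by omega) (by omega) (Or.inr (by omega))]
  congr 2
  ext i k
  exact h i _ (by omega) (Fin.is_lt _) (Or.inl (by omega))

lemma exists_minors (N : ℕ) (D : ℕ → ℕ → ℝ) (hD : ∀ a b, D a b ≠ 0) (h0 : ∀ a, D a 0 = 1) :
    ∃ M : ℕ → ℕ → ℝ, ∀ a b, a ≤ N → b ≤ N → minorM M a b = D a b := by
  suffices H : ∀ b, ∃ M : ℕ → ℕ → ℝ, ∀ a b', a ≤ N → b' ≤ b → minorM M a b' = D a b' from H N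
  intro b
  induction b with
  | zero =>
    refine ⟨0, fun a b' _ hb => ?_⟩
    obtain rfl : b' = 0 := by omega
    rw [minorM_zero, h0]
  | succ b ih =>
    suffices H : ∀ n, ∃ M : ℕ → ℕ → ℝ, (∀ a b', a ≤ N → b' ≤ b → minorM M a b' = D a b') ∧
        ∀ a, a < n → a ≤ N → minorM M a (b+1) = D a (b+1) by
      obtain ⟨M, h1, h2⟩ := H (N+1)
      refine ⟨M, fun a b' ha hb => ?_⟩
      rcases Nat.lt_or_ge b b' with h | h
      · obtain rfl : b' = b + 1 := by omega
        exact h2 a (by omega) ha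
      · exact h1 a b' ha h
    intro n
    induction n with
    | zero =>
      obtain ⟨M, hM⟩ := ih
      exact ⟨M, hM, fun a h => by omega⟩
    | succ n ihn =>
      obtain ⟨M, h1, h2⟩ := ihn
      by_cases hn : n ≤ N
      swap
      · exact ⟨M, h1, fun a _ h' => h2 a (by omega) h'⟩
      let y : ℝ := M (n+b) b + (D n (b+1) - minorM M n (b+1)) / D n b
      let M' : ℕ → ℕ → ℝ := fun r j => if r = n + b ∧ j = b then y else M r j
      have e1 : ∀ a b', b' ≤ b → minorM M' a b' = minorM M a b' := fun a b' hb =>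
        minorM_congr fun i j hi hj => if_neg (by omega)
      refine ⟨M', fun a b' ha hb => by rw [e1 _ _ hb, h1 a b' ha hb], fun a ha haN => ?_⟩
      rcases Nat.lt_or_ge a n with h | h
      · rw [← h2 a h haN]
        exact minorM_congr fun i j hi hj => if_neg (by omega)
      · obtain rfl : a = n := by omega
        have := minorM_succ (M := M') (M' := M) (a := a) (b := b)
          fun i j hi hj hij => if_neg (by omega)
        rw [e1 a b le_rfl, h1 a b hn le_rfl] at this
        have hy : M' (a+b) b = y := if_pos ⟨rfl, rfl⟩
        have hd := hD a b
        rw [hy] at this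
        have : minorM M' a (b+1) = minorM M a (b+1) + (y - M (a+b) b) * D a b := by linarith
        rw [this]
        simp only [y]
        field_simp
        ring

lemma minors_unique {d : ℕ} {M M' : ℕ → ℕ → ℝ}
    (hl : ∀ r j, r < j → j < d → M r j = 0) (hl' : ∀ r j, r < j → j < d → M' r j = 0)
    (hne : ∀ a b, a + b ≤ d → minorM M a b ≠ 0)
    (heq : ∀ a b, a + b ≤ d → minorM M a b = minorM M' a b) :
    ∀ j, j < d → ∀ r, r < d → M r j = M' r j := by
  intro j
  induction j using Nat.strong_induction_on with
  | _ j ihj =>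
    intro hj r
    induction r using Nat.strong_induction_on with
    | _ r ihr =>
      intro hr
      rcases Nat.lt_or_ge r j with h | h
      · rw [hl r j h hj, hl' r j h hj]
      · obtain ⟨a, rfl⟩ := Nat.exists_eq_add_of_le' h
        have := minorM_succ (M := M) (M' := M') (a := a) (b := j) (by
          intro i k hi hk hik
          rcases Nat.lt_or_ge k j with hkj | hkj
          · exact ihj k hkj (by omega) _ (by omega)
          · obtain rfl : k = j := by omega
            exact ihr _ (by omega) (by omega))
        rw [heq a (j+1) (by omega), ← heq a j (by omega)] at this
        have h3 := hne a j (by omega)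
        exact mul_right_cancel₀ h3 (by linarith)

lemma minor_lower {d : ℕ} {M : ℕ → ℕ → ℝ}
    (hl : ∀ r j, r < j → j < d → M r j = 0) (h1 : ∀ j, j < d → M j j = 1) {b : ℕ} (hb : b ≤ d) :
    minorM M 0 b = 1 := by
  unfold minorM
  rw [Matrix.det_of_isLowerTriangular]
  · exact Finset.prod_eq_one fun i _ => by simpa using h1 i (by omega)
  · intro i j hij
    have : i < j := by simpa using hij
    simpa using hl i j this (by omega)

/-- ratio of minors -/
def ratD (D : ℕ → ℕ → ℝ) (a b : ℕ) : ℝ :=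
  (D (a-1) b * D a (b+1) * D (a+1) (b-1)) / (D (a+1) b * D a (b-1) * D (a-1) (b+1))

lemma ratD_unique {d : ℕ} {D D' : ℕ → ℕ → ℝ}
    (_hne : ∀ a b, a + b ≤ d → D a b ≠ 0) (hne' : ∀ a b, a + b ≤ d → D' a b ≠ 0)
    (h0 : ∀ a, a ≤ d → D a 0 = D' a 0) (h1 : ∀ a, a + 1 ≤ d → D a 1 = D' a 1)
    (h2 : ∀ b, b ≤ d → D 0 b = D' 0 b)
    (hr : ∀ a b, 1 ≤ a → 1 ≤ b → a + b + 1 ≤ d → ratD D a b = ratD D' a b) :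
    ∀ b a, a + b ≤ d → D a b = D' a b := by
  intro b
  induction b using Nat.strong_induction_on with
  | _ b ihb =>
    intro a
    induction a with
    | zero => exact fun h => h2 b (by omega)
    | succ a iha =>
      intro h
      match b, ihb, iha, h with
      | 0, _, _, h => exact h0 _ (by omega)
      | 1, _, _, h => exact h1 _ (by omega)
      | b+2, ihb, iha, h =>
        have := hr (a+1) (b+1) (by omega) (by omega) (by omega)
        simp only [ratD, Nat.add_sub_cancel] at this
        rw [ihb (b+1) (by omega) a (by omega), ihb b (by omega) (a+1+1) (by omega),
          ihb (b+1) (by omega) (a+1+1) (by omega), ihb b (by omega) (a+1) (by omega),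
          show b + 1 + 1 = b + 2 from rfl, iha (by omega)] at this
        have n1 := hne' a (b+1) (by omega)
        have n2 := hne' (a+1+1) b (by omega)
        have n3 := hne' (a+1+1) (b+1) (by omega)
        have n4 := hne' (a+1) b (by omega)
        have n5 := hne' a (b+2) (by omega)
        field_simp at this
        exact this

def solD (x : ℕ → ℕ → ℝ) : ℕ → ℕ → ℝ
  | 0, _ => 1
  | 1, _ => 1
  | _+2, 0 => 1
  | b+2, a+1 => x (a+1) (b+1) * (solD x (b+1) (a+2) * solD x b (a+1) * solD x (b+2) a) /
      (solD x (b+1) a * solD x b (a+2))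
termination_by b a => (b, a)

lemma solD_ne (x : ℕ → ℕ → ℝ) (hx : ∀ a b, x a b ≠ 0) : ∀ b a, solD x b a ≠ 0 := by
  intro b
  induction b using Nat.strong_induction_on with
  | _ b ihb =>
    intro a
    induction a with
    | zero => match b with
      | 0 => simp [solD]
      | 1 => simp [solD]
      | b+2 => simp [solD]
    | succ a iha => match b, ihb, iha with
      | 0, _, _ => simp [solD]
      | 1, _, _ => simp [solD]
      | b+2, ihb, iha =>
        rw [solD]
        have n1 := ihb (b+1) (by omega)
        have n2 := ihb b (by omega)
        simp [hx, n1, n2, iha]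

lemma ratD_solD (x : ℕ → ℕ → ℝ) (hx : ∀ a b, x a b ≠ 0) {a b : ℕ} (ha : 1 ≤ a) (hb : 1 ≤ b) :
    ratD (fun a b => solD x b a) a b = x a b := by
  obtain ⟨a, rfl⟩ := Nat.exists_eq_add_of_le' ha
  obtain ⟨b, rfl⟩ := Nat.exists_eq_add_of_le' hb
  have hn := solD_ne x hx
  simp only [ratD, Nat.add_sub_cancel]
  rw [show b + 1 + 1 = b + 2 from rfl, show a + 1 + 1 = a + 2 from rfl, solD]
  have n1 := hn (b+1) (a+2)
  have n2 := hn b (a+1)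
  have n3 := hn (b+2) a
  have n4 := hn (b+1) a
  have n5 := hn b (a+2)
  field_simp

def estd (d i : ℕ) : Vec d := fun r => if (r : ℕ) = i then 1 else 0
def cE (d k : ℕ) : Fin k → Vec d := fun i => estd d i
def cG (d k : ℕ) : Fin k → Vec d := fun i => estd d (d - k + i)
def cF (d : ℕ) (M : ℕ → ℕ → ℝ) (k : ℕ) : Fin k → Vec d := fun j r => M r j

lemma wedge_std {d a b c : ℕ} (h : a + b + c = d) (M : ℕ → ℕ → ℝ) :
    wedgeDet (cE d a) (cF d M b) (cG d c) = minorM M a b := by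
  rw [wedgeDet_eq h]
  have : (Matrix.of fun i j : (Fin a ⊕ Fin b) ⊕ Fin c =>
      Sum.elim (Sum.elim (cE d a) (cF d M b)) (cG d c) j (epsS a b c d h i)) =
      Matrix.fromBlocks (Matrix.fromBlocks 1 (Matrix.of fun (i : Fin a) (j : Fin b) => M i j) 0
        (Matrix.of fun i j : Fin b => M (a + i) j)) 0
        (Matrix.of fun (i : Fin c) (j : Fin a ⊕ Fin b) => Sum.elim (Sum.elim (cE d a) (cF d M b)) (cG d c) (Sum.inl j)
          (epsS a b c d h (Sum.inr i))) 1 := by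
    subst h
    ext i j
    rcases i with (i | i) | i <;> rcases j with (j | j) | j <;>
      simp [epsS, cE, cF, cG, estd, Matrix.one_apply, Fin.ext_iff] <;> omega
  rw [this, Matrix.det_fromBlocks_zero₁₂, Matrix.det_fromBlocks_zero₂₁]
  simp [minorM]

lemma iSup_fin3 {α : Type*} [CompleteLattice α] (A : Fin 3 → α) :
    ⨆ j, A j = A 0 ⊔ A 1 ⊔ A 2 := by
  apply le_antisymm
  · refine iSup_le fun j => ?_
    fin_cases j
    · exact le_sup_of_le_left le_sup_left
    · exact le_sup_of_le_left le_sup_right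
    · exact le_sup_right
  · exact sup_le (sup_le (le_iSup A 0) (le_iSup A 1)) (le_iSup A 2)

lemma MaxSpan.top {d : ℕ} {E F G : ℕ → Submodule ℝ (Vec d)} (h : MaxSpan ![E, F, G])
    {a b c : ℕ} (habc : a + b + c = d) : E a ⊔ F b ⊔ G c = ⊤ := by
  have := h ![a, b, c] (by intro j; fin_cases j <;> simp <;> omega)
  rw [iSup_fin3, Fin.sum_univ_three] at this
  change Module.finrank ℝ ↥(E a ⊔ F b ⊔ G c) = min (a + b + c) d at this
  apply Submodule.eq_top_of_finrank_eq
  rw [this, habc]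
  simp

lemma build_flag {d : ℕ} {E F G : ℕ → Submodule ℝ (Vec d)} (hE : Monotone E) (hF : Monotone F)
    (hG : Monotone G) (hE1 : ∀ k, Module.finrank ℝ (E k) ≤ k)
    (hF1 : ∀ k, Module.finrank ℝ (F k) ≤ k) (hG1 : ∀ k, Module.finrank ℝ (G k) ≤ k)
    (ht : ∀ a b c, a + b + c = d → E a ⊔ F b ⊔ G c = ⊤) :
    IsFlag E ∧ IsFlag F ∧ IsFlag G ∧ MaxSpan ![E, F, G] := by
  have key : ∀ a b c, a + b + c = d → d ≤ Module.finrank ℝ (E a) + Module.finrank ℝ (F b) +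
      Module.finrank ℝ (G c) := by
    intro a b c h
    have h1 := Submodule.finrank_add_le_finrank_add_finrank (E a ⊔ F b) (G c)
    have h2 := Submodule.finrank_add_le_finrank_add_finrank (E a) (F b)
    have h3 : Module.finrank ℝ ↥(E a ⊔ F b ⊔ G c) = d := by rw [ht a b c h]; simp
    omega
  have lower : ∀ a b c, a + b + c ≤ d →
      Module.finrank ℝ ↥(E a ⊔ F b ⊔ G c) = a + b + c := by
    intro a b c h
    obtain ⟨n, hn⟩ := Nat.exists_eq_add_of_le h
    have k1 := Submodule.finrank_sup_add_finrank_inf_eq (E (a + n)) (F b ⊔ G c)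
    have k2 : Module.finrank ℝ ↥(E (a+n) ⊔ (F b ⊔ G c)) = d := by
      rw [← sup_assoc, ht (a+n) b c (by omega)]; simp
    have k3 := Submodule.finrank_add_le_finrank_add_finrank (F b) (G c)
    have k4 := hE1 (a+n)
    have k5 := hF1 b
    have k6 := hG1 c
    have k7 := Submodule.finrank_sup_add_finrank_inf_eq (E a) (F b ⊔ G c)
    have k8 : Module.finrank ℝ ↥(E a ⊓ (F b ⊔ G c)) ≤
        Module.finrank ℝ ↥(E (a + n) ⊓ (F b ⊔ G c)) :=
      Submodule.finrank_mono (inf_le_inf_right _ (hE (by omega)))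
    have k9 := key a (b + n) c (by omega)
    have k10 := hF1 (b+n)
    have k11 := hE1 a
    rw [sup_assoc]
    omega
  refine ⟨⟨hE, fun k hk => ?_⟩, ⟨hF, fun k hk => ?_⟩, ⟨hG, fun k hk => ?_⟩, ?_⟩
  · have := key k (d-k) 0 (by omega)
    have h1 := hE1 k
    have h2 := hF1 (d-k)
    have h3 := hG1 0
    omega
  · have := key (d-k) k 0 (by omega)
    have h1 := hE1 (d-k)
    have h2 := hF1 k
    have h3 := hG1 0
    omega
  · have := key (d-k) 0 k (by omega)
    have h1 := hE1 (d-k)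
    have h2 := hF1 0
    have h3 := hG1 k
    omega
  · intro a ha
    rw [iSup_fin3, Fin.sum_univ_three]
    change Module.finrank ℝ ↥(E (a 0) ⊔ F (a 1) ⊔ G (a 2)) = _
    rcases Nat.le_total (a 0 + a 1 + a 2) d with h | h
    · rw [lower _ _ _ h, min_eq_left h]
    · rw [min_eq_right h]
      have h0 := ha 0
      have h1 := ha 1
      have : (⊤ : Submodule ℝ (Vec d)) ≤ E (a 0) ⊔ F (a 1) ⊔ G (a 2) := by
        rw [← ht (a 0) (min (a 1) (d - a 0)) (d - a 0 - min (a 1) (d - a 0)) (by omega)]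
        exact sup_le_sup (sup_le_sup le_rfl (hF (by omega))) (hG (by omega))
      rw [top_le_iff.1 this]
      simp

lemma mem_cG {d k : ℕ} (hk : k ≤ d) (x : Vec d) :
    x ∈ Submodule.span ℝ (Set.range (cG d k)) ↔ ∀ r : Fin d, (r : ℕ) < d - k → x r = 0 := by
  constructor
  · intro hx r hr
    induction hx using Submodule.span_induction with
    | mem x hx =>
      obtain ⟨i, rfl⟩ := hx
      simp [cG, estd]
      omega
    | zero => rfl
    | add x y _ _ h1 h2 => simp [h1, h2]
    | smul c x _ h => simp [h]
  · intro h
    rw [pi_eq_sum_univ' x]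
    refine Submodule.sum_mem _ fun i _ => ?_
    rcases Nat.lt_or_ge i (d - k) with hi | hi
    · rw [h i hi, zero_smul]; exact Submodule.zero_mem _
    · refine Submodule.smul_mem _ _ (Submodule.subset_span ⟨⟨i - (d - k), by omega⟩, ?_⟩)
      ext r
      simp only [cG, estd, Pi.single_apply, Fin.ext_iff]
      have : d - k + ((i : ℕ) - (d - k)) = i := by omega
      rw [this]

lemma adapted_exists {d : ℕ} {E G : ℕ → Submodule ℝ (Vec d)} (hE : IsFlag E) (hG : IsFlag G)
    (h : ∀ i, i ≤ d → E i ⊓ G (d - i) = ⊥) :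
    ∃ v : ℕ → Vec d, ∀ i, i < d → v i ∈ E (i+1) ∧ v i ∈ G (d - i) ∧ v i ∉ E i ∧
      v i ∉ G (d - i - 1) := by
  have : ∀ i, ∃ x : Vec d, i < d → x ∈ E (i+1) ∧ x ∈ G (d - i) ∧ x ∉ E i ∧
      x ∉ G (d - i - 1) := by
    intro i
    by_cases hi : i < d
    swap
    · exact ⟨0, fun h => absurd h hi⟩
    have h1 := Submodule.finrank_sup_add_finrank_inf_eq (E (i+1)) (G (d - i))
    rw [hE.2 _ (by omega), hG.2 _ (by omega)] at h1
    have h2 : Module.finrank ℝ ↥(E (i+1) ⊔ G (d - i)) ≤ d := by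
      simpa using Submodule.finrank_le (E (i+1) ⊔ G (d - i))
    have h3 : E (i+1) ⊓ G (d - i) ≠ ⊥ := by
      intro h0
      rw [h0, finrank_bot] at h1
      omega
    obtain ⟨x, hx, hx0⟩ := Submodule.exists_mem_ne_zero_of_ne_bot h3
    refine ⟨x, fun _ => ⟨hx.1, hx.2, fun hx' => hx0 ?_, fun hx' => hx0 ?_⟩⟩
    · have : x ∈ E i ⊓ G (d - i) := ⟨hx', hx.2⟩
      rwa [h i hi.le, Submodule.mem_bot] at this
    · have : x ∈ E (i+1) ⊓ G (d - (i+1)) := ⟨hx.1, hx'⟩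
      rwa [h (i+1) hi, Submodule.mem_bot] at this
  choose v hv using this
  exact ⟨v, hv⟩

lemma adapted_span_le {d : ℕ} {E : ℕ → Submodule ℝ (Vec d)} (hE : IsFlag E) {v : ℕ → Vec d}
    (h1 : ∀ i, i < d → v i ∈ E (i+1)) {k : ℕ} (hk : k ≤ d) :
    Submodule.span ℝ (Set.range fun i : Fin k => v i) ≤ E k := by
  rw [Submodule.span_le]
  rintro _ ⟨i, rfl⟩
  exact hE.1 (show (i:ℕ) + 1 ≤ k by omega) (h1 i (by omega))

lemma adapted_li {d : ℕ} {E : ℕ → Submodule ℝ (Vec d)} (hE : IsFlag E) {v : ℕ → Vec d}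
    (h1 : ∀ i, i < d → v i ∈ E (i+1)) (h2 : ∀ i, i < d → v i ∉ E i) :
    ∀ k, k ≤ d → LinearIndependent ℝ (fun i : Fin k => v i) := by
  intro k
  induction k with
  | zero => intro _; exact linearIndependent_empty_type
  | succ k ih =>
    intro hk
    rw [linearIndependent_finSucc']
    refine ⟨ih (by omega), fun hm => h2 k (by omega) ?_⟩
    exact adapted_span_le hE h1 (k := k) (by omega) hm

lemma adapted_span {d : ℕ} {E : ℕ → Submodule ℝ (Vec d)} (hE : IsFlag E) {v : ℕ → Vec d}
    (h1 : ∀ i, i < d → v i ∈ E (i+1)) (h2 : ∀ i, i < d → v i ∉ E i) {k : ℕ} (hk : k ≤ d) :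
    Submodule.span ℝ (Set.range fun i : Fin k => v i) = E k := by
  apply Submodule.eq_of_le_of_finrank_eq (adapted_span_le hE h1 hk)
  rw [finrank_span_eq_card (adapted_li hE h1 h2 k hk), hE.2 k hk]
  simp

lemma adapted_span' {d : ℕ} {E G : ℕ → Submodule ℝ (Vec d)} (hE : IsFlag E) (hG : IsFlag G)
    {v : ℕ → Vec d}
    (h1 : ∀ i, i < d → v i ∈ E (i+1)) (h2 : ∀ i, i < d → v i ∉ E i)
    (h3 : ∀ i, i < d → v i ∈ G (d - i)) {k : ℕ} (hk : k ≤ d) :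
    Submodule.span ℝ (Set.range fun i : Fin k => v (d - k + i)) = G k := by
  apply Submodule.eq_of_le_of_finrank_eq
  · rw [Submodule.span_le]
    rintro _ ⟨i, rfl⟩
    exact hG.1 (show d - (d - k + (i:ℕ)) ≤ k by omega) (h3 _ (by omega))
  · have := (adapted_li hE h1 h2 d le_rfl).comp
      (fun i : Fin k => (⟨d - k + i, by omega⟩ : Fin d)) (by
        intro i j hij
        simp only [Fin.ext_iff] at hij ⊢
        omega)
    rw [hG.2 k hk]
    exact (finrank_span_eq_card this).trans (by simp)

lemma inf_bot_of_top {d : ℕ} {E G : ℕ → Submodule ℝ (Vec d)} (hE : IsFlag E) (hG : IsFlag G)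
    {i : ℕ} (hi : i ≤ d) (h : E i ⊔ G (d - i) = ⊤) : E i ⊓ G (d - i) = ⊥ := by
  have h1 := Submodule.finrank_sup_add_finrank_inf_eq (E i) (G (d - i))
  rw [hE.2 _ hi, hG.2 _ (by omega), h, finrank_top, Module.finrank_fin_fun] at h1
  exact Submodule.finrank_eq_zero.1 (by omega)

lemma IsFlag.zero {d : ℕ} {E : ℕ → Submodule ℝ (Vec d)} (hE : IsFlag E) : E 0 = ⊥ :=
  Submodule.finrank_eq_zero.1 (hE.2 0 (Nat.zero_le _))

lemma smul_mem_iff' {d : ℕ} (p : Submodule ℝ (Vec d)) {c : ℝ} (hc : c ≠ 0) (x : Vec d) :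
    c • x ∈ p ↔ x ∈ p := p.smul_mem_iff hc

lemma normal_form {d : ℕ} (hd : 3 ≤ d) {E F G : ℕ → Submodule ℝ (Vec d)}
    (hE : IsFlag E) (hF : IsFlag F) (hG : IsFlag G) (hM : MaxSpan ![E, F, G]) :
    ∃ (T : Vec d ≃ₗ[ℝ] Vec d) (M : ℕ → ℕ → ℝ),
      (∀ k, k ≤ d → (E k).map (T : Vec d →ₗ[ℝ] Vec d) = Submodule.span ℝ (Set.range (cE d k))) ∧
      (∀ k, k ≤ d → (F k).map (T : Vec d →ₗ[ℝ] Vec d) = Submodule.span ℝ (Set.range (cF d M k))) ∧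
      (∀ k, k ≤ d → (G k).map (T : Vec d →ₗ[ℝ] Vec d) = Submodule.span ℝ (Set.range (cG d k))) ∧
      (∀ r j, r < j → j < d → M r j = 0) ∧ (∀ j, j < d → M j j = 1) ∧
      (∀ r, r < d → M r 0 = 1) := by
  have hEG : ∀ i, i ≤ d → E i ⊓ G (d - i) = ⊥ := fun i hi => inf_bot_of_top hE hG hi (by
    have := hM.top (a := i) (b := 0) (c := d - i) (by omega)
    rwa [hF.zero, sup_bot_eq] at this)
  have hFG : ∀ i, i ≤ d → F i ⊓ G (d - i) = ⊥ := fun i hi => inf_bot_of_top hF hG hi (by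
    have := hM.top (a := 0) (b := i) (c := d - i) (by omega)
    rwa [hE.zero, bot_sup_eq] at this)
  obtain ⟨v, hv⟩ := adapted_exists hE hG hEG
  obtain ⟨f, hf⟩ := adapted_exists hF hG hFG
  -- scaling of v
  let B0 := basisOfLinearIndependentOfCardEqFinrank'
    (fun i : Fin d => v i) (adapted_li hE (fun i hi => (hv i hi).1) (fun i hi => (hv i hi).2.2.1) d le_rfl)
    (by simp)
  have hB0 : ∀ i, B0 i = v i := fun i => by simp [B0]
  let co : ℕ → ℝ := fun i => if h : i < d then B0.repr (f 0) ⟨i, h⟩ else 1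
  have hco : ∀ i : Fin d, co i = B0.repr (f 0) i := fun i => by simp [co]
  have hsum0 : f 0 = ∑ i : Fin d, co i • v i := by
    conv_lhs => rw [← B0.sum_repr (f 0)]
    simp only [hco, hB0]
  have hF1 : Submodule.span ℝ (Set.range fun i : Fin 1 => f i) = F 1 :=
    adapted_span hF (fun i hi => (hf i hi).1) (fun i hi => (hf i hi).2.2.1) (by omega)
  have hcone : ∀ i, i < d → co i ≠ 0 := by
    intro i hi h0
    have hmem : f 0 ∈ E i ⊔ G (d - 1 - i) := by
      rw [hsum0]
      refine Submodule.sum_mem _ fun j _ => ?_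
      rcases lt_trichotomy (j : ℕ) i with h | h | h
      · exact Submodule.smul_mem _ _ (Submodule.mem_sup_left
          (hE.1 (show (j:ℕ) + 1 ≤ i by omega) (hv j j.2).1))
      · rw [h, h0, zero_smul]; exact Submodule.zero_mem _
      · exact Submodule.smul_mem _ _ (Submodule.mem_sup_right
          (hG.1 (show d - (j:ℕ) ≤ d - 1 - i by omega) (hv j j.2).2.1))
    have hle : F 1 ≤ E i ⊔ G (d - 1 - i) := by
      rw [← hF1, Submodule.span_le]
      rintro _ ⟨j, rfl⟩
      have : (j : ℕ) = 0 := by omega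
      simpa [this] using hmem
    have ht := hM.top (a := i) (b := 1) (c := d - 1 - i) (by omega)
    have h2 : (⊤ : Submodule ℝ (Vec d)) ≤ E i ⊔ G (d - 1 - i) := by
      rw [← ht]
      exact sup_le (sup_le le_sup_left hle) le_sup_right
    have h3 := Submodule.finrank_add_le_finrank_add_finrank (E i) (G (d - 1 - i))
    rw [top_le_iff.1 h2, hE.2 i hi.le, hG.2 _ (by omega), finrank_top, Module.finrank_fin_fun] at h3
    omega
  let w : ℕ → Vec d := fun i => co i • v i
  have hw1 : ∀ i, i < d → w i ∈ E (i+1) := fun i hi => Submodule.smul_mem _ _ (hv i hi).1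
  have hw2 : ∀ i, i < d → w i ∉ E i := fun i hi h =>
    (hv i hi).2.2.1 ((smul_mem_iff' _ (hcone i hi) _).1 h)
  have hw3 : ∀ i, i < d → w i ∈ G (d - i) := fun i hi => Submodule.smul_mem _ _ (hv i hi).2.1
  let B := basisOfLinearIndependentOfCardEqFinrank'
    (fun i : Fin d => w i) (adapted_li hE hw1 hw2 d le_rfl) (by simp)
  have hB : ∀ i, B i = w i := fun i => by simp [B]
  let T : Vec d ≃ₗ[ℝ] Vec d := B.equivFun
  have hTw : ∀ i, i < d → T (w i) = estd d i := by
    intro i hi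
    rw [← hB ⟨i, hi⟩]
    ext r
    simp only [T, Module.Basis.equivFun_self, estd, Fin.ext_iff]
    by_cases h : (r : ℕ) = i
    · simp [h]
    · rw [if_neg h, if_neg (fun h' => h h'.symm)]
  have hTf : ∀ r, T (f 0) r = 1 := by
    intro r
    have : f 0 = ∑ i : Fin d, (fun _ => (1:ℝ)) i • B i := by
      rw [hsum0]; simp [hB, w]
    simp only [T]
    rw [this, Module.Basis.equivFun_apply, Module.Basis.repr_sum_self]
  have mapE : ∀ k, k ≤ d → (E k).map (T : Vec d →ₗ[ℝ] Vec d) =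
      Submodule.span ℝ (Set.range (cE d k)) := by
    intro k hk
    rw [← adapted_span hE hw1 hw2 hk, Submodule.map_span, ← Set.range_comp]
    congr 2
    ext1 i
    exact hTw i (by omega)
  have mapG : ∀ k, k ≤ d → (G k).map (T : Vec d →ₗ[ℝ] Vec d) =
      Submodule.span ℝ (Set.range (cG d k)) := by
    intro k hk
    rw [← adapted_span' hE hG hw1 hw2 hw3 hk, Submodule.map_span, ← Set.range_comp]
    congr 2
    ext1 i
    exact hTw _ (by omega)
  let s : ℕ → ℝ := fun j => if h : j < d then T (f j) ⟨j, h⟩ else 1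
  have hlow : ∀ j, j < d → ∀ r : Fin d, (r : ℕ) < j → T (f j) r = 0 := by
    intro j hj r hr
    have : T (f j) ∈ (G (d - j)).map (T : Vec d →ₗ[ℝ] Vec d) :=
      Submodule.mem_map_of_mem (hf j hj).2.1
    rw [mapG _ (by omega), mem_cG (by omega)] at this
    exact this r (by omega)
  have hs : ∀ j, j < d → s j ≠ 0 := by
    intro j hj h0
    have h0' : T (f j) ⟨j, hj⟩ = 0 := by simpa [s, hj] using h0
    have : T (f j) ∈ (G (d - j - 1)).map (T : Vec d →ₗ[ℝ] Vec d) := by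
      rw [mapG _ (by omega), mem_cG (by omega)]
      intro r hr
      rcases Nat.lt_or_ge r j with h | h
      · exact hlow j hj r h
      · have : r = ⟨j, hj⟩ := Fin.ext (by simp; omega)
        rw [this, h0']
    obtain ⟨y, hy, hy'⟩ := this
    have : y = f j := T.injective hy'
    exact (hf j hj).2.2.2 (this ▸ hy)
  let f' : ℕ → Vec d := fun j => (s j)⁻¹ • f j
  have hf1 : ∀ i, i < d → f' i ∈ F (i+1) := fun i hi => Submodule.smul_mem _ _ (hf i hi).1
  have hf2 : ∀ i, i < d → f' i ∉ F i := fun i hi h =>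
    (hf i hi).2.2.1 ((smul_mem_iff' _ (inv_ne_zero (hs i hi)) _).1 h)
  let M : ℕ → ℕ → ℝ := fun r j => if h : r < d then T (f' j) ⟨r, h⟩ else 0
  refine ⟨T, M, mapE, ?_, mapG, ?_, ?_, ?_⟩
  · intro k hk
    rw [← adapted_span hF hf1 hf2 hk, Submodule.map_span, ← Set.range_comp]
    congr 2
    ext i r
    simp [cF, M]
  · intro r j hr hj
    have hrd : r < d := by omega
    simp [M, hrd, f', hlow j hj ⟨r, hrd⟩ hr]
  · intro j hj
    have h1 := hs j hj
    have h2 : T (f j) ⟨j, hj⟩ = s j := by simp [s, hj]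
    simp [M, hj, f', h2, h1]
  · intro r hr
    have h0 : s 0 = 1 := by simp [s, hTf]
    simp [M, hr, f', hTf, h0]

lemma std_flags {d : ℕ} (M : ℕ → ℕ → ℝ) (hM : ∀ a b, a + b ≤ d → minorM M a b ≠ 0) :
    IsFlag (fun k => Submodule.span ℝ (Set.range (cE d k))) ∧
    IsFlag (fun k => Submodule.span ℝ (Set.range (cF d M k))) ∧
    IsFlag (fun k => Submodule.span ℝ (Set.range (cG d k))) ∧
    MaxSpan ![(fun k => Submodule.span ℝ (Set.range (cE d k))),
      (fun k => Submodule.span ℝ (Set.range (cF d M k))),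
      (fun k => Submodule.span ℝ (Set.range (cG d k)))] := by
  have hr : ∀ (k : ℕ) (u : Fin k → Vec d),
      Module.finrank ℝ (Submodule.span ℝ (Set.range u)) ≤ k := fun k u => by
    simpa [Set.finrank] using finrank_range_le_card (R := ℝ) u
  refine build_flag ?_ ?_ ?_ (fun k => hr k _) (fun k => hr k _) (fun k => hr k _) ?_
  · intro k k' hk
    apply Submodule.span_mono
    rintro _ ⟨i, rfl⟩
    exact ⟨⟨i, by omega⟩, rfl⟩
  · intro k k' hk
    apply Submodule.span_mono
    rintro _ ⟨i, rfl⟩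
    exact ⟨⟨i, by omega⟩, rfl⟩
  · intro k k' hk
    apply Submodule.span_mono
    rintro _ ⟨i, rfl⟩
    refine ⟨⟨(d - k + i) - (d - k'), by omega⟩, ?_⟩
    simp only [cG]
    congr 1
    omega
  · intro a b c h
    rw [← wedgeDet_ne_zero_iff h, wedge_std h]
    exact hM a b (by omega)

lemma std_ratio {d : ℕ} (M : ℕ → ℕ → ℝ) {a b c : ℕ} (ha : 1 ≤ a) (hb : 1 ≤ b) (hc : 1 ≤ c)
    (h : a + b + c = d) :
    tripleRatio a b c (cE d) (cF d M) (cG d) = ratD (minorM M) a b := by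
  unfold tripleRatio ratD
  rw [wedge_std (by omega), wedge_std (by omega), wedge_std (by omega), wedge_std (by omega),
    wedge_std (by omega), wedge_std (by omega)]

lemma choice_symm {d : ℕ} {E : ℕ → Submodule ℝ (Vec d)} (T : Vec d ≃ₗ[ℝ] Vec d)
    {e : (k : ℕ) → Fin k → Vec d}
    (h : ∀ k, k ≤ d → (E k).map (T : Vec d →ₗ[ℝ] Vec d) = Submodule.span ℝ (Set.range (e k))) :
    ChoiceFor E (fun k i => T.symm (e k i)) := by
  intro k hk
  have : (Set.range fun i => T.symm (e k i)) = (T.symm : Vec d →ₗ[ℝ] Vec d) '' Set.range (e k) := by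
    rw [← Set.range_comp]; rfl
  rw [this, ← Submodule.map_span, ← h k hk, ← Submodule.map_comp]
  simp

lemma nf_minor {d : ℕ} {E F G : ℕ → Submodule ℝ (Vec d)} (hM : MaxSpan ![E, F, G])
    (T : Vec d ≃ₗ[ℝ] Vec d) {M : ℕ → ℕ → ℝ}
    (h1 : ∀ k, k ≤ d → (E k).map (T : Vec d →ₗ[ℝ] Vec d) = Submodule.span ℝ (Set.range (cE d k)))
    (h2 : ∀ k, k ≤ d → (F k).map (T : Vec d →ₗ[ℝ] Vec d) = Submodule.span ℝ (Set.range (cF d M k)))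
    (h3 : ∀ k, k ≤ d → (G k).map (T : Vec d →ₗ[ℝ] Vec d) = Submodule.span ℝ (Set.range (cG d k)))
    (a b : ℕ) (hab : a + b ≤ d) : minorM M a b ≠ 0 := by
  have h : a + b + (d - a - b) = d := by omega
  rw [← wedge_std h, wedgeDet_ne_zero_iff h, ← h1 _ (by omega), ← h2 _ (by omega),
    ← h3 _ (by omega), ← Submodule.map_sup, ← Submodule.map_sup, hM.top h, Submodule.map_top]
  exact LinearMap.range_eq_top.2 T.surjective

/-- Theorem 2.4 (Fock–Goncharov): the triple ratios `X_{a,b,c}`, for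
`(a,b,c) ∈ Θ°_d`, give a bijection between configurations of three maximum span
flags in `ℝ^d` and `(ℝ∖{0})^{Θ°_d}`: (i) two maximum span triples with the same
triple ratios differ by an element of `GL(d,ℝ)`, and (ii) every collection of
nonzero reals indexed by `Θ°_d` is realized by some maximum span triple. -/
theorem stmt15 {d : ℕ} (hd : 3 ≤ d) :
    (∀ E F G E' F' G' : ℕ → Submodule ℝ (Vec d),
      IsFlag E → IsFlag F → IsFlag G → IsFlag E' → IsFlag F' → IsFlag G' →
      MaxSpan ![E, F, G] → MaxSpan ![E', F', G'] →
      (∀ a b c : ℕ, 1 ≤ a → 1 ≤ b → 1 ≤ c → a + b + c = d →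
        ∀ e f g e' f' g' : (k : ℕ) → Fin k → Vec d,
          ChoiceFor E e → ChoiceFor F f → ChoiceFor G g →
          ChoiceFor E' e' → ChoiceFor F' f' → ChoiceFor G' g' →
          tripleRatio a b c e f g = tripleRatio a b c e' f' g') →
      ∃ T : Vec d ≃ₗ[ℝ] Vec d, ∀ i, i ≤ d →
        (E i).map (T : Vec d →ₗ[ℝ] Vec d) = E' i ∧
        (F i).map (T : Vec d →ₗ[ℝ] Vec d) = F' i ∧
        (G i).map (T : Vec d →ₗ[ℝ] Vec d) = G' i) ∧
    (∀ x : ℕ → ℕ → ℕ → ℝ,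
      (∀ a b c : ℕ, 1 ≤ a → 1 ≤ b → 1 ≤ c → a + b + c = d → x a b c ≠ 0) →
      ∃ E F G : ℕ → Submodule ℝ (Vec d),
        IsFlag E ∧ IsFlag F ∧ IsFlag G ∧ MaxSpan ![E, F, G] ∧
        ∀ a b c : ℕ, 1 ≤ a → 1 ≤ b → 1 ≤ c → a + b + c = d →
          ∀ e f g : (k : ℕ) → Fin k → Vec d,
            ChoiceFor E e → ChoiceFor F f → ChoiceFor G g →
            tripleRatio a b c e f g = x a b c) := by
  constructor
  · intro E F G E' F' G' hE hF hG hE' hF' hG' hM hM' hr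
    obtain ⟨T, M, h1, h2, h3, h4, h5, h6⟩ := normal_form hd hE hF hG hM
    obtain ⟨T', M', h1', h2', h3', h4', h5', h6'⟩ := normal_form hd hE' hF' hG' hM'
    have hn := nf_minor hM T h1 h2 h3
    have hn' := nf_minor hM' T' h1' h2' h3'
    have hrat : ∀ a b, 1 ≤ a → 1 ≤ b → a + b + 1 ≤ d →
        ratD (minorM M) a b = ratD (minorM M') a b := by
      intro a b ha hb hab
      have hc : 1 ≤ d - a - b := by omega
      have habc : a + b + (d - a - b) = d := by omega
      obtain ⟨s1, s2, s3, -⟩ := std_flags M hn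
      obtain ⟨s1', s2', s3', -⟩ := std_flags M' hn'
      have k := hr a b (d - a - b) ha hb hc habc _ _ _ _ _ _ (choice_symm T h1) (choice_symm T h2)
        (choice_symm T h3) (choice_symm T' h1') (choice_symm T' h2') (choice_symm T' h3')
      rw [← std_ratio M ha hb hc habc, ← std_ratio M' ha hb hc habc]
      have k1 := tripleRatio_change T s1 s2 s3 (choice_symm T h1) (fun k _ => rfl)
        (choice_symm T h2) (fun k _ => rfl) (choice_symm T h3) (fun k _ => rfl) h1 h2 h3
        ha hb hc habc
      have k2 := tripleRatio_change T' s1' s2' s3' (choice_symm T' h1') (fun k _ => rfl)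
        (choice_symm T' h2') (fun k _ => rfl) (choice_symm T' h3') (fun k _ => rfl) h1' h2' h3'
        ha hb hc habc
      rw [k1, k2, k]
    have hmin : ∀ b a, a + b ≤ d → minorM M a b = minorM M' a b := by
      refine ratD_unique hn hn' ?_ ?_ ?_ hrat
      · intro a _
        rw [minorM_zero, minorM_zero]
      · intro a ha
        rw [minorM_one, minorM_one, h6 a (by omega), h6' a (by omega)]
      · intro b hb
        rw [minor_lower h4 h5 hb, minor_lower h4' h5' hb]
    have hMM := minors_unique h4 h4' hn (fun a b h => hmin b a h)
    refine ⟨T.trans T'.symm, fun i hi => ?_⟩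
    have key : ∀ (A A' : Submodule ℝ (Vec d)),
        A.map (T : Vec d →ₗ[ℝ] Vec d) = A'.map (T' : Vec d →ₗ[ℝ] Vec d) →
        A.map ((T.trans T'.symm : Vec d ≃ₗ[ℝ] Vec d) : Vec d →ₗ[ℝ] Vec d) = A' := by
      intro A A' h
      rw [LinearEquiv.coe_trans, Submodule.map_comp, h, ← Submodule.map_comp]
      simp
    refine ⟨key _ _ ?_, key _ _ ?_, key _ _ ?_⟩
    · rw [h1 i hi, h1' i hi]
    · rw [h2 i hi, h2' i hi]
      congr 2
      ext j r
      exact hMM j (by omega) r r.2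
    · rw [h3 i hi, h3' i hi]
  · intro x hx
    let y : ℕ → ℕ → ℝ := fun a b => if x a b (d - a - b) = 0 then 1 else x a b (d - a - b)
    have hy : ∀ a b, y a b ≠ 0 := by
      intro a b
      simp only [y]
      split_ifs with h
      · exact one_ne_zero
      · exact h
    obtain ⟨M, hM⟩ := exists_minors d (fun a b => solD y b a) (fun a b => solD_ne y hy b a)
      (fun a => by simp [solD])
    have hn : ∀ a b, a + b ≤ d → minorM M a b ≠ 0 := fun a b h => by
      rw [hM a b (by omega) (by omega)]
      exact solD_ne y hy b a
    obtain ⟨s1, s2, s3, s4⟩ := std_flags M hn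
    refine ⟨_, _, _, s1, s2, s3, s4, ?_⟩
    intro a b c ha hb hc habc e f g he hf hg
    have k1 := tripleRatio_change (LinearEquiv.refl ℝ (Vec d)) s1 s2 s3 he (fun k _ => rfl)
      hf (fun k _ => rfl) hg (fun k _ => rfl) (fun k _ => by simp) (fun k _ => by simp)
      (fun k _ => by simp) ha hb hc habc
    rw [← k1, std_ratio M ha hb hc habc]
    have k2 : ratD (minorM M) a b = ratD (fun a b => solD y b a) a b := by
      unfold ratD
      rw [hM _ _ (by omega) (by omega), hM _ _ (by omega) (by omega),
        hM _ _ (by omega) (by omega), hM _ _ (by omega) (by omega),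
        hM _ _ (by omega) (by omega), hM _ _ (by omega) (by omega)]
    rw [k2, ratD_solD y hy ha hb]
    have hc' : d - a - b = c := by omega
    simp only [y, hc', if_neg (hx a b c ha hb hc habc)]
end
end
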